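/- Let u be a monotone traveling wave solution of the balanced Allen-Cahn equation in the plane, and let γ : ℝ → ℝ be the function whose graph is the zero level set of u. For s ∈ ℝ define the translate u_s(x,y) := u(s + x, γ(s) + y). Then for every sequence (s_m) with |s_m| → ∞ there exist a subsequence (s_{m_k}) and a sign ε ∈ {1, −1} such that u_{s_{m_k}} converges, together with all partial derivatives up to order 3, uniformly on every compact subset of ℝ², to the one-dimensional profile (x,y) ↦ g(ε x). -/

import Mathlib

open Real Filter MeasureTheory Metric

noncomputable def pdx (u : ℝ → ℝ → ℝ) (x y : ℝ) : ℝ := deriv (fun t => u t y) x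

noncomputable def pdy (u : ℝ → ℝ → ℝ) (x y : ℝ) : ℝ := deriv (fun t => u x t) y

noncomputable def pdxx (u : ℝ → ℝ → ℝ) (x y : ℝ) : ℝ := deriv (fun t => pdx u t y) x

noncomputable def pdyy (u : ℝ → ℝ → ℝ) (x y : ℝ) : ℝ := deriv (fun t => pdy u x t) y

/-- `F` is a balanced double-well potential. -/
def BalancedDoubleWell (F : ℝ → ℝ) : Prop :=
  ContDiff ℝ 3 F ∧ deriv F (-1) = 0 ∧ deriv F 1 = 0 ∧
  0 < deriv (deriv F) (-1) ∧ 0 < deriv (deriv F) 1 ∧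
  (∀ s ∈ Set.Ioo (-1 : ℝ) 0, 0 < deriv F s) ∧
  (∀ s ∈ Set.Ioo (0 : ℝ) 1, deriv F s < 0) ∧
  F (-1) = 0 ∧ F 1 = 0

/-- `u` is a `C³` solution of `Δu + c uᵧ = F'(u)` on `ℝ²` with `|u| ≤ 1`
which is monotone in `y`. -/
def IsSolution (F : ℝ → ℝ) (c : ℝ) (u : ℝ → ℝ → ℝ) : Prop :=
  ContDiff ℝ 3 (fun p : ℝ × ℝ => u p.1 p.2) ∧
  (∀ x y : ℝ, pdxx u x y + pdyy u x y + c * pdy u x y = deriv F (u x y)) ∧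
  (∀ x y : ℝ, |u x y| ≤ 1) ∧
  (∀ x y : ℝ, 0 < pdy u x y)

/-- A monotone traveling wave solution connecting `-1` to `1`. -/
def IsTravelingWave (F : ℝ → ℝ) (c : ℝ) (u : ℝ → ℝ → ℝ) : Prop :=
  IsSolution F c u ∧
  (∀ x : ℝ, Tendsto (fun y => u x y) atTop (nhds 1)) ∧
  (∀ x : ℝ, Tendsto (fun y => u x y) atBot (nhds (-1)))

namespace AllenCahn

/-- The directional derivative of `w` in the direction `a`. -/
noncomputable def dirDeriv (a : ℝ × ℝ) (w : ℝ × ℝ → ℝ) (p : ℝ × ℝ) : ℝ := fderiv ℝ w p a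

/-- The operator `Δ + c ∂/∂y`. -/
noncomputable def driftLaplacian (c : ℝ) (w : ℝ × ℝ → ℝ) (p : ℝ × ℝ) : ℝ :=
  dirDeriv (1, 0) (dirDeriv (1, 0) w) p + dirDeriv (0, 1) (dirDeriv (0, 1) w) p
    + c * dirDeriv (0, 1) w p

theorem contDiff_dirDeriv {w : ℝ × ℝ → ℝ} {m n : ℕ} (hw : ContDiff ℝ n w) (hmn : m + 1 ≤ n)
    (a : ℝ × ℝ) : ContDiff ℝ m (dirDeriv a w) := by
  have h : ContDiff ℝ m (fderiv ℝ w) := hw.fderiv_right (by exact_mod_cast hmn)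
  exact h.clm_apply contDiff_const

theorem hasDerivAt_along_line {w : ℝ × ℝ → ℝ} (hw : Differentiable ℝ w) (p a : ℝ × ℝ) (t : ℝ) :
    HasDerivAt (fun s : ℝ => w (p + s • a)) (dirDeriv a w (p + t • a)) t := by
  have h1 : HasDerivAt (fun s : ℝ => p + s • a) a t := by
    simpa using ((hasDerivAt_id t).smul_const a).const_add p
  exact (hw _).hasFDerivAt.comp_hasDerivAt t h1

theorem hasDerivAt_along_line_neg {w : ℝ × ℝ → ℝ} (hw : Differentiable ℝ w) (p a : ℝ × ℝ) (t : ℝ) :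
    HasDerivAt (fun s : ℝ => w (p - s • a)) (-dirDeriv a w (p - t • a)) t := by
  have h1 : HasDerivAt (fun s : ℝ => p - s • a) (-a) t := by
    simpa using ((hasDerivAt_id t).smul_const a).const_sub p
  have := (hw (p - t • a)).hasFDerivAt.comp_hasDerivAt t h1
  simpa [dirDeriv, Function.comp_def] using this

theorem dirDeriv_comm {w : ℝ × ℝ → ℝ} (hw : ContDiff ℝ 2 w) (a b p : ℝ × ℝ) :
    dirDeriv a (dirDeriv b w) p = dirDeriv b (dirDeriv a w) p := by
  have hd : DifferentiableAt ℝ (fderiv ℝ w) p :=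
    ((hw.fderiv_right (m := 1) (by norm_num)).differentiable (by norm_num)) p
  have h (a b : ℝ × ℝ) : dirDeriv a (dirDeriv b w) p = fderiv ℝ (fderiv ℝ w) p a b := by
    unfold dirDeriv
    rw [fderiv_clm_apply hd (by fun_prop)]
    simp
  rw [h, h]
  exact (hw.contDiffAt.isSymmSndFDerivAt (by simp)) a b

theorem dirDeriv_add {v w : ℝ × ℝ → ℝ} {p : ℝ × ℝ} (hv : DifferentiableAt ℝ v p)
    (hw : DifferentiableAt ℝ w p) (a : ℝ × ℝ) :
    dirDeriv a (fun q => v q + w q) p = dirDeriv a v p + dirDeriv a w p := by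
  simp [dirDeriv, fderiv_fun_add hv hw]

theorem dirDeriv_sub {v w : ℝ × ℝ → ℝ} {p : ℝ × ℝ} (hv : DifferentiableAt ℝ v p)
    (hw : DifferentiableAt ℝ w p) (a : ℝ × ℝ) :
    dirDeriv a (fun q => v q - w q) p = dirDeriv a v p - dirDeriv a w p := by
  simp [dirDeriv, fderiv_fun_sub hv hw]

theorem dirDeriv_const_mul {w : ℝ × ℝ → ℝ} {p : ℝ × ℝ} (hw : DifferentiableAt ℝ w p) (k : ℝ)
    (a : ℝ × ℝ) : dirDeriv a (fun q => k * w q) p = k * dirDeriv a w p := by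
  simp [dirDeriv, fderiv_const_mul hw]

theorem dirDeriv_mul {v w : ℝ × ℝ → ℝ} {p : ℝ × ℝ} (hv : DifferentiableAt ℝ v p)
    (hw : DifferentiableAt ℝ w p) (a : ℝ × ℝ) :
    dirDeriv a (fun q => v q * w q) p = v p * dirDeriv a w p + w p * dirDeriv a v p := by
  simp [dirDeriv, fderiv_fun_mul hv hw]

theorem dirDeriv_comp {f : ℝ → ℝ} {w : ℝ × ℝ → ℝ} {p : ℝ × ℝ} (hf : DifferentiableAt ℝ f (w p))
    (hw : DifferentiableAt ℝ w p) (a : ℝ × ℝ) :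
    dirDeriv a (fun q => f (w q)) p = deriv f (w p) * dirDeriv a w p := by
  have := hf.hasDerivAt.comp_hasFDerivAt p hw.hasFDerivAt
  unfold dirDeriv
  rw [show (fun q => f (w q)) = f ∘ w from rfl, this.fderiv]
  simp

theorem dirDeriv_comp_add_right (w : ℝ × ℝ → ℝ) (a b p : ℝ × ℝ) :
    dirDeriv a (fun q => w (q + b)) p = dirDeriv a w (p + b) := by
  simp [dirDeriv, fderiv_comp_add_right]

theorem driftLaplacian_sub (c : ℝ) {v w : ℝ × ℝ → ℝ} (hv : ContDiff ℝ 2 v) (hw : ContDiff ℝ 2 w)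
    (p : ℝ × ℝ) :
    driftLaplacian c (fun q => v q - w q) p = driftLaplacian c v p - driftLaplacian c w p := by
  have h1 (a : ℝ × ℝ) : dirDeriv a (fun q => v q - w q)
      = fun q => dirDeriv a v q - dirDeriv a w q := by
    funext q
    exact dirDeriv_sub (hv.differentiable (by norm_num) q) (hw.differentiable (by norm_num) q) a
  have dv (a : ℝ × ℝ) := (contDiff_dirDeriv (m := 1) hv (by norm_num) a).differentiable (by norm_num)
  have dw (a : ℝ × ℝ) := (contDiff_dirDeriv (m := 1) hw (by norm_num) a).differentiable (by norm_num)
  unfold driftLaplacian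
  rw [h1, h1, dirDeriv_sub (dv _ _) (dw _ _), dirDeriv_sub (dv _ _) (dw _ _)]
  ring

theorem driftLaplacian_const_mul (c k : ℝ) {w : ℝ × ℝ → ℝ} (hw : ContDiff ℝ 2 w) (p : ℝ × ℝ) :
    driftLaplacian c (fun q => k * w q) p = k * driftLaplacian c w p := by
  have h1 (a : ℝ × ℝ) : dirDeriv a (fun q => k * w q) = fun q => k * dirDeriv a w q := by
    funext q
    exact dirDeriv_const_mul (hw.differentiable (by norm_num) q) k a
  have dw (a : ℝ × ℝ) := (contDiff_dirDeriv (m := 1) hw (by norm_num) a).differentiable (by norm_num)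
  unfold driftLaplacian
  rw [h1, h1, dirDeriv_const_mul (dw _ _), dirDeriv_const_mul (dw _ _)]
  ring

theorem driftLaplacian_comp_add_right (c : ℝ) (w : ℝ × ℝ → ℝ) (b p : ℝ × ℝ) :
    driftLaplacian c (fun q => w (q + b)) p = driftLaplacian c w (p + b) := by
  have h1 (a : ℝ × ℝ) : dirDeriv a (fun q => w (q + b)) = fun q => dirDeriv a w (q + b) :=
    funext fun q => dirDeriv_comp_add_right w a b q
  simp only [driftLaplacian, h1, dirDeriv_comp_add_right]

theorem driftLaplacian_dirDeriv (c : ℝ) {w : ℝ × ℝ → ℝ} (hw : ContDiff ℝ 3 w) (a p : ℝ × ℝ) :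
    driftLaplacian c (dirDeriv a w) p = dirDeriv a (driftLaplacian c w) p := by
  have c1 (b : ℝ × ℝ) : ContDiff ℝ 2 (dirDeriv b w) := contDiff_dirDeriv hw (by norm_num) b
  have c2 (b d : ℝ × ℝ) : Differentiable ℝ (dirDeriv d (dirDeriv b w)) :=
    (contDiff_dirDeriv (m := 1) (c1 b) (by norm_num) d).differentiable (by norm_num)
  have hw2 : ContDiff ℝ 2 w := hw.of_le (by norm_num)
  have e (b : ℝ × ℝ) : dirDeriv b (dirDeriv a w) = dirDeriv a (dirDeriv b w) :=
    funext fun q => dirDeriv_comm hw2 b a q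
  unfold driftLaplacian
  rw [e, e, dirDeriv_add (by exact ((c2 _ _) p).add ((c2 _ _) p))
    (((c1 (0, 1)).differentiable (by norm_num) p).const_mul c),
    dirDeriv_add ((c2 _ _) p) ((c2 _ _) p),
    dirDeriv_const_mul ((c1 (0, 1)).differentiable (by norm_num) p),
    dirDeriv_comm (c1 (1, 0)), dirDeriv_comm (c1 (0, 1))]

theorem second_deriv_nonpos_of_isLocalMax {k k' : ℝ → ℝ} {k'' t : ℝ}
    (hk : ∀ s, HasDerivAt k (k' s) s) (hk' : HasDerivAt k' k'' t) (hmax : IsLocalMax k t) :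
    k'' ≤ 0 := by
  by_contra! hpos
  have h0 : k' t = 0 := hmax.hasDerivAt_eq_zero (hk t)
  have hderiv : deriv k = k' := funext fun s => (hk s).deriv
  have hmin : IsLocalMin k t := by
    apply isLocalMin_of_deriv_deriv_pos
    · rwa [hderiv, hk'.deriv]
    · rw [hderiv, h0]
    · exact (hk t).continuousAt
  have hconst : k =ᶠ[nhds t] fun _ => k t := by
    filter_upwards [hmax, hmin] with s h1 h2 using le_antisymm h1 h2
  have h1 : k' =ᶠ[nhds t] fun _ => 0 := by
    have := hconst.deriv
    rw [hderiv] at this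
    simpa using this
  have h2 := h1.deriv_eq
  rw [hk'.deriv] at h2
  simp at h2
  linarith

theorem hasDerivAt_symmDiff_along {w : ℝ × ℝ → ℝ} (hw : Differentiable ℝ w) (q a : ℝ × ℝ) (t : ℝ) :
    HasDerivAt (fun s : ℝ => w (q + s • a) - w (q - s • a))
      (dirDeriv a w (q + t • a) + dirDeriv a w (q - t • a)) t := by
  exact ((hasDerivAt_along_line hw q a t).fun_sub (hasDerivAt_along_line_neg hw q a t)).congr_deriv
    (by ring)

/-- One of the two ordered pairs of coordinate directions. -/
def IsCoordPair (a b : ℝ × ℝ) : Prop :=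
  (a = (1, 0) ∧ b = (0, 1)) ∨ (a = (0, 1) ∧ b = (1, 0))

theorem mem_closedBall_two_of_add_smul {p q a : ℝ × ℝ} (hq : q ∈ closedBall p 1) (ha : ‖a‖ ≤ 1)
    {t : ℝ} (ht : |t| ≤ 1) : q + t • a ∈ closedBall p 2 := by
  rw [mem_closedBall, dist_eq_norm] at *
  have : q + t • a - p = (q - p) + t • a := by abel
  rw [this]
  refine (norm_add_le _ _).trans ?_
  rw [norm_smul, Real.norm_eq_abs]
  nlinarith [norm_nonneg a, abs_nonneg t]

theorem symmDiff_le_barrier (c : ℝ) {w : ℝ × ℝ → ℝ} (hw : ContDiff ℝ 2 w) {p : ℝ × ℝ} {M N B : ℝ}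
    (hM : ∀ q ∈ closedBall p 2, |w q| ≤ M) (hN : ∀ q ∈ closedBall p 2, |driftLaplacian c w q| ≤ N)
    (hB : N + 2 * M * (1 + |c|) < B) {a b : ℝ × ℝ} (hab : IsCoordPair a b)
    {t : ℝ} (ht0 : 0 ≤ t) (ht1 : t ≤ 1) :
    w (p + t • a) - w (p - t • a) ≤ (B + 2 * M) * t - B * t ^ 2 := by
  have hp : p ∈ closedBall p 2 := mem_closedBall_self (by norm_num)
  have hM0 : 0 ≤ M := (abs_nonneg _).trans (hM p hp)
  have hN0 : 0 ≤ N := (abs_nonneg _).trans (hN p hp)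
  have hB0 : 0 ≤ B := by nlinarith [abs_nonneg c, mul_nonneg hM0 (abs_nonneg c)]
  have hna : ‖a‖ ≤ 1 := by
    rcases hab with ⟨rfl, -⟩ | ⟨rfl, -⟩ <;> simp [Prod.norm_def]
  have dw : Differentiable ℝ w := hw.differentiable (by norm_num)
  have dw1 (e : ℝ × ℝ) : Differentiable ℝ (dirDeriv e w) :=
    (contDiff_dirDeriv (m := 1) hw (by norm_num) e).differentiable (by norm_num)
  set S : Set ((ℝ × ℝ) × ℝ) := closedBall p 1 ×ˢ Set.Icc (0 : ℝ) 1 with hS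
  set Φ : (ℝ × ℝ) × ℝ → ℝ := fun z => w (z.1 + z.2 • a) - w (z.1 - z.2 • a)
    - (2 * M * ((z.1.1 - p.1) ^ 2 + (z.1.2 - p.2) ^ 2) + (B + 2 * M) * z.2 - B * z.2 ^ 2) with hΦ
  have hcont : Continuous Φ := by
    have := hw.continuous
    fun_prop
  have hcomp : IsCompact S := (isCompact_closedBall p 1).prod isCompact_Icc
  have hpt : (p, t) ∈ S := ⟨mem_closedBall_self (by norm_num), ht0, ht1⟩
  obtain ⟨⟨q, r⟩, hqr, hmax⟩ := hcomp.exists_isMaxOn ⟨_, hpt⟩ hcont.continuousOn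
  have hmax' : ∀ z ∈ S, Φ z ≤ Φ (q, r) := fun z hz => hmax hz
  suffices h : Φ (q, r) ≤ 0 by
    have := (hmax' _ hpt).trans h
    simp only [hΦ, sub_self] at this
    linarith
  by_contra! hpos
  obtain ⟨hq, hr0, hr1⟩ := hqr
  simp only at hq hr0 hr1
  have hplus := mem_closedBall_two_of_add_smul hq hna (t := r) (by rw [abs_of_nonneg hr0]; exact hr1)
  have hminus : q - r • a ∈ closedBall p 2 := by
    have := mem_closedBall_two_of_add_smul hq hna (t := -r)
      (by rw [abs_neg, abs_of_nonneg hr0]; exact hr1)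
    simpa [sub_eq_add_neg] using this
  have hw2 : w (q + r • a) - w (q - r • a) ≤ 2 * M := by
    have h1 := (abs_le.1 (hM _ hplus)).2
    have h2 := (abs_le.1 (hM _ hminus)).1
    linarith
  have hpos' : 2 * M * ((q.1 - p.1) ^ 2 + (q.2 - p.2) ^ 2) + (B + 2 * M) * r - B * r ^ 2
      < w (q + r • a) - w (q - r • a) := by
    have := hpos
    simp only [hΦ] at this
    linarith
  have hBr : 0 ≤ B * r * (1 - r) := mul_nonneg (mul_nonneg hB0 hr0) (by linarith)
  have hr0' : 0 < r := by
    rcases hr0.lt_or_eq with h | h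
    · exact h
    · subst h
      simp at hpos'
      nlinarith [mul_nonneg hM0 (add_nonneg (sq_nonneg (q.1 - p.1)) (sq_nonneg (q.2 - p.2)))]
  have hsq : (q.1 - p.1) ^ 2 + (q.2 - p.2) ^ 2 < 1 := by
    by_contra! h
    nlinarith [mul_le_mul_of_nonneg_left h hM0, mul_nonneg hM0 hr0]
  have hr1' : r < 1 := by
    rcases hr1.lt_or_eq with h | h
    · exact h
    · subst h
      nlinarith [mul_nonneg hM0 (add_nonneg (sq_nonneg (q.1 - p.1)) (sq_nonneg (q.2 - p.2)))]
  have hS' : S ∈ nhds (q, r) := by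
    refine prod_mem_nhds ?_ (Icc_mem_nhds hr0' hr1')
    refine mem_of_superset (isOpen_ball.mem_nhds ?_) ball_subset_closedBall
    rw [mem_ball, Prod.dist_eq, max_lt_iff, Real.dist_eq, Real.dist_eq, ← sq_lt_one_iff_abs_lt_one,
      ← sq_lt_one_iff_abs_lt_one]
    constructor <;> nlinarith [sq_nonneg (q.1 - p.1), sq_nonneg (q.2 - p.2)]
  have hloc : IsLocalMax Φ (q, r) := hmax.isLocalMax hS'
  have ht : dirDeriv a (dirDeriv a w) (q + r • a) - dirDeriv a (dirDeriv a w) (q - r • a)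
      + 2 * B ≤ 0 := by
    have hl : IsLocalMax (fun s : ℝ => Φ (q, s)) r :=
      hloc.comp_continuous (b := r) (g := fun s : ℝ => (q, s)) (by fun_prop)
    refine second_deriv_nonpos_of_isLocalMax
      (k' := fun s => dirDeriv a w (q + s • a) + dirDeriv a w (q - s • a)
        - ((B + 2 * M) - B * (2 * s))) ?_ ?_ hl
    · intro s
      refine (hasDerivAt_symmDiff_along dw q a s).fun_sub ?_
      have h1 : HasDerivAt (fun s : ℝ => (B + 2 * M) * s) (B + 2 * M) s := by
        simpa using (hasDerivAt_id s).const_mul (B + 2 * M)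
      have h2 : HasDerivAt (fun s : ℝ => B * s ^ 2) (B * (2 * s)) s := by
        simpa using ((hasDerivAt_id s).pow 2).const_mul B
      exact (h1.const_add (2 * M * ((q.1 - p.1) ^ 2 + (q.2 - p.2) ^ 2))).fun_sub h2
    · have h1 := (hasDerivAt_along_line (dw1 a) q a r).fun_add (hasDerivAt_along_line_neg (dw1 a) q a r)
      have h2 : HasDerivAt (fun s : ℝ => (B + 2 * M) - B * (2 * s)) (-(2 * B)) r := by
        have := (((hasDerivAt_id r).const_mul 2).const_mul B).const_sub (B + 2 * M)
        simpa [mul_comm] using this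
      exact (h1.fun_sub h2).congr_deriv (by ring)
  have hslice (e : ℝ × ℝ) : IsLocalMax (fun s : ℝ => Φ (q + s • e, r)) 0 := by
    exact IsMaxFilter.comp_tendsto (g := fun s : ℝ => (q + s • e, r)) (b := 0) (f := Φ)
      (l := nhds (q, r))
      (by rw [zero_smul, add_zero]; exact hloc) (by
        have : Continuous (fun s : ℝ => (q + s • e, r)) := by fun_prop
        simpa using this.tendsto 0)
  have hderiv (v : ℝ × ℝ → ℝ) (hv : Differentiable ℝ v) (e : ℝ × ℝ) (s : ℝ) :
      HasDerivAt (fun s : ℝ => v (q + s • e + r • a) - v (q + s • e - r • a))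
        (dirDeriv e v (q + s • e + r • a) - dirDeriv e v (q + s • e - r • a)) s := by
    have h1 := hasDerivAt_along_line hv (q + r • a) e s
    have h2 := hasDerivAt_along_line hv (q - r • a) e s
    have e1 (s : ℝ) : q + s • e + r • a = q + r • a + s • e := by abel
    have e2 (s : ℝ) : q + s • e - r • a = q - r • a + s • e := by abel
    simp only [e1, e2]
    exact h1.fun_sub h2
  have hpoly (e : ℝ × ℝ) (s : ℝ) : HasDerivAt (fun s : ℝ =>
      2 * M * (((q + s • e).1 - p.1) ^ 2 + ((q + s • e).2 - p.2) ^ 2) + (B + 2 * M) * r - B * r ^ 2)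
      (4 * M * (((q + s • e).1 - p.1) * e.1 + ((q + s • e).2 - p.2) * e.2)) s := by
    have h1 : HasDerivAt (fun s : ℝ => (q + s • e).1 - p.1) e.1 s := by
      simpa using (((hasDerivAt_id s).mul_const e.1).const_add q.1).sub_const p.1
    have h2 : HasDerivAt (fun s : ℝ => (q + s • e).2 - p.2) e.2 s := by
      simpa using (((hasDerivAt_id s).mul_const e.2).const_add q.2).sub_const p.2
    have := ((((h1.fun_pow 2).fun_add (h2.fun_pow 2)).const_mul (2 * M)).add_const ((B + 2 * M) * r)).sub_const
      (B * r ^ 2)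
    exact this.congr_deriv (by simp; ring)
  have hpoly' (e : ℝ × ℝ) (s : ℝ) : HasDerivAt (fun s : ℝ =>
      4 * M * (((q + s • e).1 - p.1) * e.1 + ((q + s • e).2 - p.2) * e.2))
      (4 * M * (e.1 ^ 2 + e.2 ^ 2)) s := by
    have h1 : HasDerivAt (fun s : ℝ => (q + s • e).1 - p.1) e.1 s := by
      simpa using (((hasDerivAt_id s).mul_const e.1).const_add q.1).sub_const p.1
    have h2 : HasDerivAt (fun s : ℝ => (q + s • e).2 - p.2) e.2 s := by
      simpa using (((hasDerivAt_id s).mul_const e.2).const_add q.2).sub_const p.2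
    have := ((h1.mul_const e.1).fun_add (h2.mul_const e.2)).const_mul (4 * M)
    exact this.congr_deriv (by ring)
  have hx : dirDeriv b (dirDeriv b w) (q + r • a) - dirDeriv b (dirDeriv b w) (q - r • a)
      - 4 * M * (b.1 ^ 2 + b.2 ^ 2) ≤ 0 := by
    have := second_deriv_nonpos_of_isLocalMax
      (fun s => (hderiv w dw b s).fun_sub (hpoly b s))
      ((hderiv _ (dw1 b) b 0).fun_sub (hpoly' b 0)) (hslice b)
    simpa using this
  have hy : dirDeriv (0, 1) w (q + r • a) - dirDeriv (0, 1) w (q - r • a)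
      = 4 * M * (q.2 - p.2) := by
    have := (hslice (0, 1)).hasDerivAt_eq_zero ((hderiv w dw (0, 1) 0).fun_sub (hpoly (0, 1) 0))
    simp at this
    linarith
  have hb : b.1 ^ 2 + b.2 ^ 2 = 1 := by
    rcases hab with ⟨-, rfl⟩ | ⟨-, rfl⟩ <;> simp
  have hsplit (z : ℝ × ℝ) : driftLaplacian c w z
      = dirDeriv a (dirDeriv a w) z + dirDeriv b (dirDeriv b w) z + c * dirDeriv (0, 1) w z := by
    rcases hab with ⟨rfl, rfl⟩ | ⟨rfl, rfl⟩ <;> simp only [driftLaplacian] <;> ring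
  have l1 := (abs_le.1 (hN _ hplus)).1
  have l2 := (abs_le.1 (hN _ hminus)).2
  rw [hsplit] at l1 l2
  rw [hb] at hx
  have hcy : c * (q.2 - p.2) ≤ |c| := by
    have h1 : |q.2 - p.2| ≤ 1 := by
      rw [← sq_le_one_iff_abs_le_one]
      nlinarith [sq_nonneg (q.1 - p.1)]
    calc c * (q.2 - p.2) ≤ |c * (q.2 - p.2)| := le_abs_self _
      _ = |c| * |q.2 - p.2| := abs_mul _ _
      _ ≤ |c| := mul_le_of_le_one_right (abs_nonneg c) h1
  have hcy' : c * dirDeriv (0, 1) w (q + r • a) - c * dirDeriv (0, 1) w (q - r • a)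
      ≤ 4 * M * |c| := by
    rw [← mul_sub, hy]
    nlinarith [mul_le_mul_of_nonneg_left hcy hM0]
  nlinarith

/-- Interior gradient estimate for the operator `Δ + c ∂/∂y`. -/
theorem abs_dirDeriv_le (c : ℝ) {w : ℝ × ℝ → ℝ} (hw : ContDiff ℝ 2 w) {p : ℝ × ℝ} {M N : ℝ}
    (hM : ∀ q ∈ closedBall p 2, |w q| ≤ M) (hN : ∀ q ∈ closedBall p 2, |driftLaplacian c w q| ≤ N)
    {a b : ℝ × ℝ} (hab : IsCoordPair a b) :
    |dirDeriv a w p| ≤ (2 + |c|) * (M + N) := by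
  have hp : p ∈ closedBall p 2 := mem_closedBall_self (by norm_num)
  have hM0 : 0 ≤ M := (abs_nonneg _).trans (hM p hp)
  have hN0 : 0 ≤ N := (abs_nonneg _).trans (hN p hp)
  have key : ∀ v : ℝ × ℝ → ℝ, ContDiff ℝ 2 v → (∀ q ∈ closedBall p 2, |v q| ≤ M) →
      (∀ q ∈ closedBall p 2, |driftLaplacian c v q| ≤ N) →
      dirDeriv a v p ≤ (2 + |c|) * (M + N) := by
    intro v hv hvM hvN
    have dv : Differentiable ℝ v := hv.differentiable (by norm_num)
    have hB : ∀ B, N + 2 * M * (1 + |c|) < B → 2 * dirDeriv a v p ≤ B + 2 * M := by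
      intro B hB
      have hd := hasDerivAt_symmDiff_along dv p a 0
      simp only [zero_smul, add_zero, sub_zero] at hd
      have hlim := hd.tendsto_slope_zero_right
      have hlim' : Tendsto (fun t : ℝ => B + 2 * M - B * t) (nhdsWithin 0 (Set.Ioi 0))
          (nhds (B + 2 * M)) := by
        have : Continuous fun t : ℝ => B + 2 * M - B * t := by fun_prop
        have h := (this.tendsto 0).mono_left (nhdsWithin_le_nhds (s := Set.Ioi 0))
        simpa using h
      have := le_of_tendsto_of_tendsto hlim hlim' ?_
      · linarith
      · filter_upwards [Ioo_mem_nhdsGT (show (0 : ℝ) < 1 by norm_num)] with t ht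
        have h := symmDiff_le_barrier c hv hvM hvN hB hab ht.1.le ht.2.le
        simp only [zero_add, zero_smul, add_zero, sub_zero, sub_self, smul_eq_mul]
        rw [inv_mul_le_iff₀ ht.1]
        linarith [h, show (B + 2 * M) * t - B * t ^ 2 = t * (B + 2 * M - B * t) by ring]
    have h2 : 2 * dirDeriv a v p - 2 * M ≤ N + 2 * M * (1 + |c|) :=
      le_of_forall_gt fun B h => by linarith [hB ((B + (N + 2 * M * (1 + |c|))) / 2) (by linarith)]
    nlinarith [abs_nonneg c, mul_nonneg hN0 (abs_nonneg c)]
  rw [abs_le]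
  constructor
  · have hneg : ContDiff ℝ 2 (fun q => (-1 : ℝ) * w q) := contDiff_const.mul hw
    have h := key (fun q => (-1 : ℝ) * w q) hneg (fun q hq => by simpa using hM q hq)
      (fun q hq => by rw [driftLaplacian_const_mul c (-1) hw]; simpa using hN q hq)
    rw [dirDeriv_const_mul (hw.differentiable (by norm_num) p)] at h
    linarith
  · exact key w hw hM hN

/-- One of the two coordinate directions. -/
def IsCoord (a : ℝ × ℝ) : Prop := a = (1, 0) ∨ a = (0, 1)

theorem isCoord_fst : IsCoord (1, 0) := Or.inl rfl

theorem isCoord_snd : IsCoord (0, 1) := Or.inr rfl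

theorem IsCoord.exists_isCoordPair {a : ℝ × ℝ} (ha : IsCoord a) : ∃ b, IsCoordPair a b := by
  rcases ha with rfl | rfl
  · exact ⟨(0, 1), Or.inl ⟨rfl, rfl⟩⟩
  · exact ⟨(1, 0), Or.inr ⟨rfl, rfl⟩⟩

theorem IsCoord.norm_eq {a : ℝ × ℝ} (ha : IsCoord a) : ‖a‖ = 1 := by
  rcases ha with rfl | rfl <;> simp [Prod.norm_def]

theorem abs_sub_along_line_le {w : ℝ × ℝ → ℝ} (hw : Differentiable ℝ w) {q a : ℝ × ℝ} {M h : ℝ}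
    (hh : 0 ≤ h) (hM : ∀ t ∈ Set.Icc 0 h, |dirDeriv a w (q + t • a)| ≤ M) :
    |w (q + h • a) - w q| ≤ M * h := by
  have := norm_image_sub_le_of_norm_deriv_le_segment' (f := fun s : ℝ => w (q + s • a))
    (f' := fun t => dirDeriv a w (q + t • a)) (a := 0) (b := h) (C := M)
    (fun t _ => (hasDerivAt_along_line hw q a t).hasDerivWithinAt)
    (fun t ht => hM t ⟨ht.1, ht.2.le⟩) h ⟨hh, le_rfl⟩
  simpa using this

/-- Gradient estimate for a directional derivative that need not itself be twice differentiable. -/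
theorem abs_dirDeriv_dirDeriv_le (c : ℝ) {z : ℝ × ℝ → ℝ} (hz : ContDiff ℝ 2 z)
    (hLz : Differentiable ℝ (driftLaplacian c z)) {p : ℝ × ℝ} {M N : ℝ} {a b : ℝ × ℝ}
    (ha : IsCoord a) (hb : IsCoord b)
    (hM : ∀ q ∈ closedBall p 3, |dirDeriv b z q| ≤ M)
    (hN : ∀ q ∈ closedBall p 3, |dirDeriv b (driftLaplacian c z) q| ≤ N) :
    |dirDeriv a (dirDeriv b z) p| ≤ (2 + |c|) * (M + N) := by
  obtain ⟨a', haa'⟩ := ha.exists_isCoordPair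
  have dz : Differentiable ℝ z := hz.differentiable (by norm_num)
  have dz1 : Differentiable ℝ (dirDeriv a z) :=
    (contDiff_dirDeriv (m := 1) hz (by norm_num) a).differentiable (by norm_num)
  have hmem {q : ℝ × ℝ} (hq : q ∈ closedBall p 2) {h : ℝ} (h1 : h ≤ 1) {t : ℝ}
      (ht : t ∈ Set.Icc 0 h) : q + t • b ∈ closedBall p 3 := by
    rw [mem_closedBall, dist_eq_norm] at *
    have e : q + t • b - p = (q - p) + t • b := by abel
    rw [e]
    refine (norm_add_le _ _).trans ?_
    rw [norm_smul, hb.norm_eq, Real.norm_eq_abs, abs_of_nonneg ht.1]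
    linarith [ht.2]
  have key : ∀ h ∈ Set.Ioo (0 : ℝ) 1,
      |h⁻¹ * (dirDeriv a z (p + h • b) - dirDeriv a z p)| ≤ (2 + |c|) * (M + N) := by
    intro h hh
    have hshift : ContDiff ℝ 2 (fun q => z (q + h • b)) := hz.comp (contDiff_id.add contDiff_const)
    have hdiff : ContDiff ℝ 2 (fun q => z (q + h • b) - z q) := hshift.sub hz
    have hquot : ContDiff ℝ 2 (fun q => h⁻¹ * (z (q + h • b) - z q)) := contDiff_const.mul hdiff
    have hinv : |h⁻¹| = h⁻¹ := abs_of_pos (inv_pos.2 hh.1)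
    have := abs_dirDeriv_le c hquot (p := p) (M := M) (N := N) ?_ ?_ haa'
    · rwa [dirDeriv_const_mul (hdiff.differentiable (by norm_num) p),
        dirDeriv_sub (hshift.differentiable (by norm_num) p) (dz p), dirDeriv_comp_add_right] at this
    · intro q hq
      rw [abs_mul, hinv, inv_mul_le_iff₀ hh.1, mul_comm]
      exact abs_sub_along_line_le dz hh.1.le fun t ht => hM _ (hmem hq hh.2.le ht)
    · intro q hq
      rw [driftLaplacian_const_mul c _ hdiff, driftLaplacian_sub c hshift hz,
        driftLaplacian_comp_add_right, abs_mul, hinv, inv_mul_le_iff₀ hh.1, mul_comm]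
      exact abs_sub_along_line_le hLz hh.1.le fun t ht => hN _ (hmem hq hh.2.le ht)
  rw [dirDeriv_comm hz]
  have hd := (hasDerivAt_along_line dz1 p b 0).tendsto_slope_zero_right
  simp only [zero_smul, add_zero, zero_add, smul_eq_mul] at hd
  refine le_of_tendsto hd.abs ?_
  filter_upwards [Ioo_mem_nhdsGT (show (0 : ℝ) < 1 by norm_num)] with h hh using key h hh

/-- A `C³` solution of `Δw + c ∂w/∂y = f(w)` with values in `[-1, 1]`. -/
structure IsBddSol (f : ℝ → ℝ) (c : ℝ) (w : ℝ × ℝ → ℝ) : Prop where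
  contDiff : ContDiff ℝ 3 w
  eq : ∀ p, driftLaplacian c w p = f (w p)
  bound : ∀ p, |w p| ≤ 1

namespace IsBddSol

variable {f : ℝ → ℝ} {c : ℝ} {w : ℝ × ℝ → ℝ}

theorem contDiff_two (hw : IsBddSol f c w) : ContDiff ℝ 2 w := hw.contDiff.of_le (by norm_num)

theorem differentiable (hw : IsBddSol f c w) : Differentiable ℝ w :=
  hw.contDiff.differentiable (by norm_num)

theorem contDiff_dirDeriv (hw : IsBddSol f c w) (a : ℝ × ℝ) : ContDiff ℝ 2 (dirDeriv a w) :=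
  AllenCahn.contDiff_dirDeriv hw.contDiff (by norm_num) a

theorem differentiable_dirDeriv (hw : IsBddSol f c w) (a : ℝ × ℝ) :
    Differentiable ℝ (dirDeriv a w) :=
  (hw.contDiff_dirDeriv a).differentiable (by norm_num)

theorem mem_Icc (hw : IsBddSol f c w) (p : ℝ × ℝ) : w p ∈ Set.Icc (-1 : ℝ) 1 :=
  abs_le.1 (hw.bound p)

theorem driftLaplacian_dirDeriv (hw : IsBddSol f c w) (hf : ContDiff ℝ 2 f) (a p : ℝ × ℝ) :
    driftLaplacian c (dirDeriv a w) p = deriv f (w p) * dirDeriv a w p := by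
  rw [AllenCahn.driftLaplacian_dirDeriv c hw.contDiff, funext hw.eq,
    dirDeriv_comp (hf.differentiable (by norm_num) _) (hw.differentiable p)]

theorem dirDeriv_driftLaplacian_dirDeriv (hw : IsBddSol f c w) (hf : ContDiff ℝ 2 f)
    (a b p : ℝ × ℝ) :
    dirDeriv b (driftLaplacian c (dirDeriv a w)) p
      = deriv f (w p) * dirDeriv b (dirDeriv a w) p
        + dirDeriv a w p * (deriv (deriv f) (w p) * dirDeriv b w p) := by
  have hf' : Differentiable ℝ (deriv f) :=
    ((contDiff_succ_iff_deriv (n := 1)).1 hf).2.2.differentiable (by norm_num)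
  rw [funext (hw.driftLaplacian_dirDeriv hf a),
    dirDeriv_mul (v := fun q => deriv f (w q)) ((hf' _).comp p (hw.differentiable p))
      (hw.differentiable_dirDeriv a p),
    dirDeriv_comp (hf' _) (hw.differentiable p)]

theorem differentiable_driftLaplacian_dirDeriv (hw : IsBddSol f c w) (hf : ContDiff ℝ 2 f)
    (a : ℝ × ℝ) : Differentiable ℝ (driftLaplacian c (dirDeriv a w)) := by
  have hf' : Differentiable ℝ (deriv f) :=
    ((contDiff_succ_iff_deriv (n := 1)).1 hf).2.2.differentiable (by norm_num)
  rw [funext (hw.driftLaplacian_dirDeriv hf a)]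
  exact (hf'.comp hw.differentiable).mul (hw.differentiable_dirDeriv a)

theorem comp_add_right (hw : IsBddSol f c w) (b : ℝ × ℝ) : IsBddSol f c (fun q => w (q + b)) where
  contDiff := hw.contDiff.comp (contDiff_id.add contDiff_const)
  eq p := by rw [driftLaplacian_comp_add_right, hw.eq]
  bound p := hw.bound _

end IsBddSol

theorem exists_abs_le_of_continuous {k : ℝ → ℝ} (hk : Continuous k) :
    ∃ K, 0 ≤ K ∧ ∀ t ∈ Set.Icc (-1 : ℝ) 1, |k t| ≤ K := by
  obtain ⟨K, hK⟩ := (isCompact_Icc (a := (-1 : ℝ)) (b := 1)).exists_bound_of_continuousOn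
    hk.continuousOn
  exact ⟨K, (norm_nonneg _).trans (hK 0 (by norm_num)), fun t ht => hK t ht⟩

/-- Global bounds on the first and second derivatives of bounded solutions. -/
theorem exists_deriv_bounds {f : ℝ → ℝ} (hf : ContDiff ℝ 2 f) (c : ℝ) :
    ∃ K, 0 ≤ K ∧ ∀ w, IsBddSol f c w → ∀ a, IsCoord a → ∀ p,
      |dirDeriv a w p| ≤ K ∧ ∀ b, IsCoord b → |dirDeriv b (dirDeriv a w) p| ≤ K := by
  obtain ⟨K0, hK0, h0⟩ := exists_abs_le_of_continuous hf.continuous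
  obtain ⟨K1, hK1, h1⟩ := exists_abs_le_of_continuous (hf.continuous_deriv (by norm_num))
  set A := (2 + |c|) * (1 + K0) with hA
  have hA0 : 0 ≤ A := by positivity
  have hgrad : ∀ w, IsBddSol f c w → ∀ a, IsCoord a → ∀ p, |dirDeriv a w p| ≤ A := by
    intro w hw a ha p
    obtain ⟨b, hab⟩ := ha.exists_isCoordPair
    refine abs_dirDeriv_le c hw.contDiff_two (fun q _ => hw.bound q) (fun q _ => ?_) hab
    rw [hw.eq]
    exact h0 _ (hw.mem_Icc q)
  refine ⟨A + (2 + |c|) * (A + K1 * A), by positivity, fun w hw a ha p => ⟨?_, fun b hb => ?_⟩⟩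
  · have : 0 ≤ (2 + |c|) * (A + K1 * A) := by positivity
    linarith [hgrad w hw a ha p]
  · obtain ⟨b', hbb'⟩ := hb.exists_isCoordPair
    have := abs_dirDeriv_le c (hw.contDiff_dirDeriv a) (p := p) (M := A) (N := K1 * A)
      (fun q _ => hgrad w hw a ha q) (fun q _ => by
        rw [hw.driftLaplacian_dirDeriv hf, abs_mul]
        exact mul_le_mul (h1 _ (hw.mem_Icc q)) (hgrad w hw a ha q) (abs_nonneg _) hK1) hbb'
    linarith

/-- Locally uniform convergence to zero along a filter. -/
def LocUnifZero {ι : Type*} (l : Filter ι) (w : ι → ℝ × ℝ → ℝ) : Prop :=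
  ∀ R : ℝ, ∀ ε > 0, ∀ᶠ i in l, ∀ p ∈ closedBall (0 : ℝ × ℝ) R, |w i p| ≤ ε

namespace LocUnifZero

variable {ι : Type*} {l : Filter ι} {v w : ι → ℝ × ℝ → ℝ}

theorem add (hv : LocUnifZero l v) (hw : LocUnifZero l w) :
    LocUnifZero l fun i p => v i p + w i p := by
  intro R ε hε
  filter_upwards [hv R (ε / 2) (by linarith), hw R (ε / 2) (by linarith)] with i h1 h2 p hp
  have := abs_add_le (v i p) (w i p)
  linarith [h1 p hp, h2 p hp]

theorem bdd_mul (hw : LocUnifZero l w) {M : ℝ} (hv : ∀ i p, |v i p| ≤ M) :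
    LocUnifZero l fun i p => v i p * w i p := by
  intro R ε hε
  have hM : 0 < |M| + 1 := by positivity
  filter_upwards [hw R (ε / (|M| + 1)) (by positivity)] with i h p hp
  rw [abs_mul]
  calc |v i p| * |w i p| ≤ (|M| + 1) * (ε / (|M| + 1)) :=
        mul_le_mul (by linarith [hv i p, le_abs_self M]) (h p hp) (abs_nonneg _) hM.le
    _ = ε := by field_simp

theorem congr (hw : LocUnifZero l w) (h : ∀ i p, w i p = v i p) : LocUnifZero l v := by
  have : w = v := funext fun i => funext fun p => h i p
  rwa [← this]

/-- `v₁ w₁ - v₂ w₂` tends to zero if `v₁ - v₂` and `w₁ - w₂` do and `v₂`, `w₁` are bounded. -/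
theorem mul_sub_mul {v₁ v₂ w₁ w₂ : ι → ℝ × ℝ → ℝ} {M N : ℝ}
    (hv : LocUnifZero l fun i p => v₁ i p - v₂ i p) (hw : LocUnifZero l fun i p => w₁ i p - w₂ i p)
    (hM : ∀ i p, |w₁ i p| ≤ M) (hN : ∀ i p, |v₂ i p| ≤ N) :
    LocUnifZero l fun i p => v₁ i p * w₁ i p - v₂ i p * w₂ i p :=
  ((hv.bdd_mul hM).add (hw.bdd_mul hN)).congr fun i p => by ring

theorem comp_sub_comp {k : ℝ → ℝ} (hk : Continuous k) (hvb : ∀ i p, |v i p| ≤ 1)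
    (hwb : ∀ i p, |w i p| ≤ 1) (h : LocUnifZero l fun i p => v i p - w i p) :
    LocUnifZero l fun i p => k (v i p) - k (w i p) := by
  intro R ε hε
  have huc : UniformContinuousOn k (Set.Icc (-1 : ℝ) 1) :=
    isCompact_Icc.uniformContinuousOn_of_continuous hk.continuousOn
  obtain ⟨δ, hδ, H⟩ := Metric.uniformContinuousOn_iff.1 huc ε hε
  filter_upwards [h R (δ / 2) (by linarith)] with i hi p hp
  refine (H _ (abs_le.1 (hvb i p)) _ (abs_le.1 (hwb i p)) ?_).le
  rw [Real.dist_eq]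
  linarith [hi p hp]

theorem dirDeriv {c : ℝ} (hC : ∀ i, ContDiff ℝ 2 (w i)) (hw : LocUnifZero l w)
    (hL : LocUnifZero l fun i => driftLaplacian c (w i)) {a : ℝ × ℝ} (ha : IsCoord a) :
    LocUnifZero l fun i => dirDeriv a (w i) := by
  obtain ⟨b, hab⟩ := ha.exists_isCoordPair
  intro R ε hε
  have hc : 0 < 2 + |c| := by positivity
  set δ := ε / (2 * (2 + |c|)) with hδ
  have hδ0 : 0 < δ := by positivity
  filter_upwards [hw (R + 2) δ hδ0, hL (R + 2) δ hδ0] with i h1 h2 p hp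
  have hsub : closedBall p 2 ⊆ closedBall (0 : ℝ × ℝ) (R + 2) :=
    closedBall_subset_closedBall' (by rw [mem_closedBall] at hp; linarith)
  refine (abs_dirDeriv_le c (hC i) (fun q hq => h1 q (hsub hq)) (fun q hq => h2 q (hsub hq))
    hab).trans (le_of_eq ?_)
  rw [hδ]
  field_simp
  ring

theorem dirDeriv_dirDeriv {c : ℝ} {a b : ℝ × ℝ} (hC : ∀ i, ContDiff ℝ 2 (w i))
    (hLd : ∀ i, Differentiable ℝ (driftLaplacian c (w i)))
    (hw : LocUnifZero l fun i => AllenCahn.dirDeriv b (w i))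
    (hL : LocUnifZero l fun i => AllenCahn.dirDeriv b (driftLaplacian c (w i)))
    (ha : IsCoord a) (hb : IsCoord b) :
    LocUnifZero l fun i => AllenCahn.dirDeriv a (AllenCahn.dirDeriv b (w i)) := by
  intro R ε hε
  have hc : 0 < 2 + |c| := by positivity
  set δ := ε / (2 * (2 + |c|)) with hδ
  have hδ0 : 0 < δ := by positivity
  filter_upwards [hw (R + 3) δ hδ0, hL (R + 3) δ hδ0] with i h1 h2 p hp
  have hsub : closedBall p 3 ⊆ closedBall (0 : ℝ × ℝ) (R + 3) :=
    closedBall_subset_closedBall' (by rw [mem_closedBall] at hp; linarith)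
  refine (abs_dirDeriv_dirDeriv_le c (hC i) (hLd i) ha hb (fun q hq => h1 q (hsub hq))
    (fun q hq => h2 q (hsub hq))).trans (le_of_eq ?_)
  rw [hδ]
  field_simp
  ring

end LocUnifZero

section Comparison

variable {ι : Type*} {l : Filter ι} {f : ℝ → ℝ} {c : ℝ} {u v : ι → ℝ × ℝ → ℝ} {a b e : ℝ × ℝ}

theorem locUnifZero_dirDeriv_sub (hf : ContDiff ℝ 2 f) (hu : ∀ i, IsBddSol f c (u i))
    (hv : ∀ i, IsBddSol f c (v i)) (h : LocUnifZero l fun i p => u i p - v i p) (ha : IsCoord a) :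
    LocUnifZero l fun i p => dirDeriv a (u i) p - dirDeriv a (v i) p := by
  have hL : LocUnifZero l fun i => driftLaplacian c fun p => u i p - v i p :=
    (LocUnifZero.comp_sub_comp hf.continuous (fun i => (hu i).bound) (fun i => (hv i).bound) h).congr
      fun i p => by
        rw [driftLaplacian_sub c (hu i).contDiff_two (hv i).contDiff_two, (hu i).eq, (hv i).eq]
  exact (h.dirDeriv (fun i => (hu i).contDiff_two.sub (hv i).contDiff_two) hL ha).congr fun i p =>
    dirDeriv_sub ((hu i).differentiable p) ((hv i).differentiable p) a

theorem locUnifZero_dirDeriv_dirDeriv_sub (hf : ContDiff ℝ 2 f) (hu : ∀ i, IsBddSol f c (u i))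
    (hv : ∀ i, IsBddSol f c (v i)) (h : LocUnifZero l fun i p => u i p - v i p) (ha : IsCoord a)
    (hb : IsCoord b) :
    LocUnifZero l fun i p => dirDeriv b (dirDeriv a (u i)) p - dirDeriv b (dirDeriv a (v i)) p := by
  obtain ⟨K, -, hK⟩ := exists_deriv_bounds hf c
  have hf' : Continuous (deriv f) := hf.continuous_deriv (by norm_num)
  obtain ⟨K1, -, h1⟩ := exists_abs_le_of_continuous hf'
  have hd := locUnifZero_dirDeriv_sub hf hu hv h ha
  have hL : LocUnifZero l fun i => driftLaplacian c fun p =>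
      dirDeriv a (u i) p - dirDeriv a (v i) p := by
    refine (LocUnifZero.mul_sub_mul (LocUnifZero.comp_sub_comp hf' (fun i => (hu i).bound)
      (fun i => (hv i).bound) h) hd (fun i p => (hK _ (hu i) a ha p).1)
      (fun i p => h1 _ ((hv i).mem_Icc p))).congr fun i p => ?_
    rw [driftLaplacian_sub c ((hu i).contDiff_dirDeriv a) ((hv i).contDiff_dirDeriv a),
      (hu i).driftLaplacian_dirDeriv hf, (hv i).driftLaplacian_dirDeriv hf]
  exact (hd.dirDeriv (fun i => ((hu i).contDiff_dirDeriv a).sub ((hv i).contDiff_dirDeriv a)) hL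
    hb).congr fun i p => dirDeriv_sub ((hu i).differentiable_dirDeriv a p)
      ((hv i).differentiable_dirDeriv a p) b

theorem locUnifZero_dirDeriv_dirDeriv_dirDeriv_sub (hf : ContDiff ℝ 2 f)
    (hu : ∀ i, IsBddSol f c (u i)) (hv : ∀ i, IsBddSol f c (v i))
    (h : LocUnifZero l fun i p => u i p - v i p) (ha : IsCoord a) (hb : IsCoord b)
    (he : IsCoord e) :
    LocUnifZero l fun i p => dirDeriv e (dirDeriv b (dirDeriv a (u i))) p
      - dirDeriv e (dirDeriv b (dirDeriv a (v i))) p := by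
  obtain ⟨K, hK0, hK⟩ := exists_deriv_bounds hf c
  have hf' : Continuous (deriv f) := hf.continuous_deriv (by norm_num)
  have hf'' : Continuous (deriv (deriv f)) :=
    ((contDiff_succ_iff_deriv (n := 1)).1 hf).2.2.continuous_deriv (by norm_num)
  obtain ⟨K1, -, h1⟩ := exists_abs_le_of_continuous hf'
  obtain ⟨K2, hK2, h2⟩ := exists_abs_le_of_continuous hf''
  have hda := locUnifZero_dirDeriv_sub hf hu hv h ha
  have hdb := locUnifZero_dirDeriv_sub hf hu hv h hb
  have hdab := locUnifZero_dirDeriv_dirDeriv_sub hf hu hv h ha hb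
  have hub (i : ι) := (hu i).bound
  have hvb (i : ι) := (hv i).bound
  have cdu (i : ι) := (hu i).contDiff_dirDeriv a
  have cdv (i : ι) := (hv i).contDiff_dirDeriv a
  have hLsub (i : ι) : driftLaplacian c (fun p => dirDeriv a (u i) p - dirDeriv a (v i) p)
      = fun p => driftLaplacian c (dirDeriv a (u i)) p - driftLaplacian c (dirDeriv a (v i)) p :=
    funext fun p => driftLaplacian_sub c (cdu i) (cdv i) p
  have hdsub (i : ι) : dirDeriv b (fun p => dirDeriv a (u i) p - dirDeriv a (v i) p)
      = fun p => dirDeriv b (dirDeriv a (u i)) p - dirDeriv b (dirDeriv a (v i)) p :=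
    funext fun p => dirDeriv_sub ((hu i).differentiable_dirDeriv a p)
      ((hv i).differentiable_dirDeriv a p) b
  have hL : LocUnifZero l fun i => dirDeriv b (driftLaplacian c fun p =>
      dirDeriv a (u i) p - dirDeriv a (v i) p) := by
    have t1 := LocUnifZero.mul_sub_mul (LocUnifZero.comp_sub_comp hf' hub hvb h) hdab
      (fun i p => (hK _ (hu i) a ha p).2 b hb) (fun i p => h1 _ ((hv i).mem_Icc p))
    have t2 := LocUnifZero.mul_sub_mul (LocUnifZero.comp_sub_comp hf'' hub hvb h) hdb
      (fun i p => (hK _ (hu i) b hb p).1) (fun i p => h2 _ ((hv i).mem_Icc p))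
    have t3 := LocUnifZero.mul_sub_mul hda t2 (M := K2 * K) (fun i p => by
      rw [abs_mul]
      exact mul_le_mul (h2 _ ((hu i).mem_Icc p)) (hK _ (hu i) b hb p).1 (abs_nonneg _) hK2)
      (fun i p => (hK _ (hv i) a ha p).1)
    refine (t1.add t3).congr fun i p => ?_
    rw [hLsub, dirDeriv_sub ((hu i).differentiable_driftLaplacian_dirDeriv hf a p)
      ((hv i).differentiable_driftLaplacian_dirDeriv hf a p),
      (hu i).dirDeriv_driftLaplacian_dirDeriv hf, (hv i).dirDeriv_driftLaplacian_dirDeriv hf]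
    ring
  refine (LocUnifZero.dirDeriv_dirDeriv (c := c) (fun i => (cdu i).sub (cdv i)) (fun i => ?_)
    (hdab.congr fun i p => by rw [hdsub]) hL he hb).congr fun i p => ?_
  · rw [hLsub]
    exact ((hu i).differentiable_driftLaplacian_dirDeriv hf a).sub
      ((hv i).differentiable_driftLaplacian_dirDeriv hf a)
  · rw [hdsub]
    exact dirDeriv_sub
      ((contDiff_dirDeriv (m := 1) (cdu i) (by norm_num) b).differentiable (by norm_num) p)
      ((contDiff_dirDeriv (m := 1) (cdv i) (by norm_num) b).differentiable (by norm_num) p) e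

end Comparison

theorem iteratedFDeriv_succ_apply_eq_dirDeriv {n : ℕ} {w : ℝ × ℝ → ℝ} (hw : ContDiff ℝ (n + 1 : ℕ) w)
    (p : ℝ × ℝ) (m : Fin (n + 1) → ℝ × ℝ) :
    iteratedFDeriv ℝ (n + 1) w p m
      = iteratedFDeriv ℝ n (dirDeriv (m (Fin.last n)) w) p (Fin.init m) := by
  have h : ContDiff ℝ n (fderiv ℝ w) := hw.fderiv_right (by norm_cast)
  have := (ContinuousLinearMap.apply ℝ ℝ (m (Fin.last n))).iteratedFDeriv_comp_left
    (f := fderiv ℝ w) (x := p) h.contDiffAt (i := n) le_rfl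
  rw [iteratedFDeriv_succ_apply_right]
  have e : dirDeriv (m (Fin.last n)) w
      = (ContinuousLinearMap.apply ℝ ℝ (m (Fin.last n))) ∘ fderiv ℝ w := rfl
  rw [e, this]
  rfl

/-- The two coordinate directions, indexed by `Fin 2`. -/
def coordVec (i : Fin 2) : ℝ × ℝ := if i = 0 then (1, 0) else (0, 1)

theorem isCoord_coordVec (i : Fin 2) : IsCoord (coordVec i) := by
  unfold coordVec IsCoord
  split_ifs <;> simp

theorem norm_multilinear_le_sum {n : ℕ} (T : ContinuousMultilinearMap ℝ (fun _ : Fin n => ℝ × ℝ) ℝ) :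
    ‖T‖ ≤ ∑ r : Fin n → Fin 2, |T fun j => coordVec (r j)| := by
  refine T.opNorm_le_bound (Finset.sum_nonneg fun _ _ => abs_nonneg _) fun m => ?_
  set x : Fin n → Fin 2 → ℝ := fun j i => if i = 0 then (m j).1 else (m j).2 with hx
  have hm : m = fun j => ∑ i : Fin 2, x j i • coordVec i := by
    funext j
    ext <;> simp [hx, coordVec, Fin.sum_univ_two]
  have hT : T m = ∑ r : Fin n → Fin 2, (∏ j, x j (r j)) * T fun j => coordVec (r j) := by
    conv_lhs => rw [hm]
    rw [T.map_sum]
    refine Finset.sum_congr rfl fun r _ => ?_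
    rw [T.map_smul_univ]
    rfl
  rw [hT, Real.norm_eq_abs, Finset.sum_mul]
  refine (Finset.abs_sum_le_sum_abs _ _).trans (Finset.sum_le_sum fun r _ => ?_)
  rw [abs_mul, mul_comm]
  refine mul_le_mul_of_nonneg_left ?_ (abs_nonneg _)
  rw [Finset.abs_prod]
  refine Finset.prod_le_prod (fun _ _ => abs_nonneg _) fun j _ => ?_
  simp only [hx]
  split_ifs
  · exact norm_fst_le (m j)
  · exact norm_snd_le (m j)

theorem locUnifZero_iteratedFDeriv_sub {ι : Type*} {l : Filter ι} {f : ℝ → ℝ} {c : ℝ}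
    {u v : ι → ℝ × ℝ → ℝ} (hf : ContDiff ℝ 2 f) (hu : ∀ i, IsBddSol f c (u i))
    (hv : ∀ i, IsBddSol f c (v i)) (h : LocUnifZero l fun i p => u i p - v i p) {n : ℕ}
    (hn : n ≤ 3) {m : Fin n → ℝ × ℝ} (hm : ∀ j, IsCoord (m j)) :
    LocUnifZero l fun i p => iteratedFDeriv ℝ n (u i) p m - iteratedFDeriv ℝ n (v i) p m := by
  have c1 {w : ℝ × ℝ → ℝ} (hw : IsBddSol f c w) : ContDiff ℝ (0 + 1 : ℕ) w :=
    hw.contDiff.of_le (by norm_num)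
  have c2 {w : ℝ × ℝ → ℝ} (hw : IsBddSol f c w) : ContDiff ℝ (1 + 1 : ℕ) w :=
    hw.contDiff.of_le (by norm_num)
  have c3 {w : ℝ × ℝ → ℝ} (hw : IsBddSol f c w) : ContDiff ℝ (2 + 1 : ℕ) w :=
    hw.contDiff.of_le (by norm_num)
  have d1 {w : ℝ × ℝ → ℝ} (hw : IsBddSol f c w) (a : ℝ × ℝ) : ContDiff ℝ (0 + 1 : ℕ) (dirDeriv a w) :=
    contDiff_dirDeriv (n := 3) hw.contDiff (by norm_num) a
  have d2 {w : ℝ × ℝ → ℝ} (hw : IsBddSol f c w) (a : ℝ × ℝ) : ContDiff ℝ (1 + 1 : ℕ) (dirDeriv a w) :=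
    contDiff_dirDeriv (n := 3) hw.contDiff (by norm_num) a
  have e1 {w : ℝ × ℝ → ℝ} (hw : IsBddSol f c w) (a b : ℝ × ℝ) :
      ContDiff ℝ (0 + 1 : ℕ) (dirDeriv b (dirDeriv a w)) :=
    contDiff_dirDeriv (n := 2) (d2 hw a) (by norm_num) b
  interval_cases n
  · exact h.congr fun i p => by simp
  · refine (locUnifZero_dirDeriv_sub hf hu hv h (hm 0)).congr fun i p => ?_
    rw [iteratedFDeriv_succ_apply_eq_dirDeriv (c1 (hu i)),
      iteratedFDeriv_succ_apply_eq_dirDeriv (c1 (hv i)), iteratedFDeriv_zero_apply,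
      iteratedFDeriv_zero_apply]
    rfl
  · refine (locUnifZero_dirDeriv_dirDeriv_sub hf hu hv h (hm 1) (hm 0)).congr fun i p => ?_
    rw [iteratedFDeriv_succ_apply_eq_dirDeriv (c2 (hu i)),
      iteratedFDeriv_succ_apply_eq_dirDeriv (c2 (hv i)),
      iteratedFDeriv_succ_apply_eq_dirDeriv (d1 (hu i) _),
      iteratedFDeriv_succ_apply_eq_dirDeriv (d1 (hv i) _), iteratedFDeriv_zero_apply,
      iteratedFDeriv_zero_apply]
    rfl
  · refine (locUnifZero_dirDeriv_dirDeriv_dirDeriv_sub hf hu hv h (hm 2) (hm 1) (hm 0)).congr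
      fun i p => ?_
    rw [iteratedFDeriv_succ_apply_eq_dirDeriv (c3 (hu i)),
      iteratedFDeriv_succ_apply_eq_dirDeriv (c3 (hv i)),
      iteratedFDeriv_succ_apply_eq_dirDeriv (d2 (hu i) _),
      iteratedFDeriv_succ_apply_eq_dirDeriv (d2 (hv i) _),
      iteratedFDeriv_succ_apply_eq_dirDeriv (e1 (hu i) _ _),
      iteratedFDeriv_succ_apply_eq_dirDeriv (e1 (hv i) _ _), iteratedFDeriv_zero_apply,
      iteratedFDeriv_zero_apply]
    rfl

/-- Locally uniform convergence of bounded solutions upgrades to convergence in `C³`. -/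
theorem tendstoLocallyUniformly_iteratedFDeriv {ι : Type*} {l : Filter ι} {f : ℝ → ℝ} {c : ℝ}
    {u : ι → ℝ × ℝ → ℝ} {v : ℝ × ℝ → ℝ} (hf : ContDiff ℝ 2 f) (hu : ∀ i, IsBddSol f c (u i))
    (hv : IsBddSol f c v) (h : LocUnifZero l fun i p => u i p - v p) {n : ℕ} (hn : n ≤ 3) :
    TendstoLocallyUniformly (fun i p => iteratedFDeriv ℝ n (u i) p) (iteratedFDeriv ℝ n v) l := by
  rw [Metric.tendstoLocallyUniformly_iff]
  intro ε hε x
  refine ⟨closedBall x 1, closedBall_mem_nhds x one_pos, ?_⟩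
  have hcard : (0 : ℝ) < Fintype.card (Fin n → Fin 2) := by
    exact_mod_cast Fintype.card_pos
  set δ := ε / (2 * Fintype.card (Fin n → Fin 2)) with hδ
  have hδ0 : 0 < δ := by positivity
  have hall : ∀ᶠ i in l, ∀ r : Fin n → Fin 2, ∀ p ∈ closedBall (0 : ℝ × ℝ) (‖x‖ + 1),
      |iteratedFDeriv ℝ n (u i) p (fun j => coordVec (r j))
        - iteratedFDeriv ℝ n v p (fun j => coordVec (r j))| ≤ δ :=
    eventually_all.2 fun r => locUnifZero_iteratedFDeriv_sub hf hu (fun _ => hv) h hn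
      (fun j => isCoord_coordVec (r j)) _ δ hδ0
  filter_upwards [hall] with i hi p hp
  have hp0 : p ∈ closedBall (0 : ℝ × ℝ) (‖x‖ + 1) :=
    closedBall_subset_closedBall' (by rw [dist_zero_right]; linarith) hp
  rw [dist_comm, dist_eq_norm]
  refine (norm_multilinear_le_sum _).trans_lt ?_
  calc ∑ r : Fin n → Fin 2, |(iteratedFDeriv ℝ n (u i) p - iteratedFDeriv ℝ n v p)
          fun j => coordVec (r j)| ≤ ∑ _r : Fin n → Fin 2, δ :=
        Finset.sum_le_sum fun r _ => hi r p hp0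
    _ = ε / 2 := by
        rw [Finset.sum_const, Finset.card_univ, nsmul_eq_mul, hδ]
        field_simp
    _ < ε := by linarith

theorem hasDerivAt_fst {w : ℝ × ℝ → ℝ} (hw : Differentiable ℝ w) (x y : ℝ) :
    HasDerivAt (fun t => w (t, y)) (dirDeriv (1, 0) w (x, y)) x := by
  simpa using hasDerivAt_along_line hw (0, y) (1, 0) x

theorem hasDerivAt_snd {w : ℝ × ℝ → ℝ} (hw : Differentiable ℝ w) (x y : ℝ) :
    HasDerivAt (fun t => w (x, t)) (dirDeriv (0, 1) w (x, y)) y := by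
  simpa using hasDerivAt_along_line hw (x, 0) (0, 1) y

/-- A bounded solution that increases in `y` from `-1` to `1`. -/
structure IsWave (f : ℝ → ℝ) (c : ℝ) (w : ℝ × ℝ → ℝ) : Prop extends IsBddSol f c w where
  pos : ∀ p, 0 < dirDeriv (0, 1) w p
  tendsto_atTop : ∀ x, Tendsto (fun y => w (x, y)) atTop (nhds 1)
  tendsto_atBot : ∀ x, Tendsto (fun y => w (x, y)) atBot (nhds (-1))

theorem isWave_of_isTravelingWave {F : ℝ → ℝ} {c : ℝ} {u : ℝ → ℝ → ℝ}
    (hu : IsTravelingWave F c u) : IsWave (deriv F) c (fun p => u p.1 p.2) := by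
  obtain ⟨⟨hC, heq, hb, hpos⟩, ht, hbot⟩ := hu
  have hd : Differentiable ℝ (fun p : ℝ × ℝ => u p.1 p.2) := hC.differentiable (by norm_num)
  have hdd (a : ℝ × ℝ) : Differentiable ℝ (dirDeriv a (fun p : ℝ × ℝ => u p.1 p.2)) :=
    (contDiff_dirDeriv (m := 2) hC (by norm_num) a).differentiable (by norm_num)
  have hx (x y : ℝ) : pdx u x y = dirDeriv (1, 0) (fun p : ℝ × ℝ => u p.1 p.2) (x, y) :=
    (hasDerivAt_fst hd x y).deriv
  have hy (x y : ℝ) : pdy u x y = dirDeriv (0, 1) (fun p : ℝ × ℝ => u p.1 p.2) (x, y) :=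
    (hasDerivAt_snd hd x y).deriv
  have hxx (x y : ℝ) : pdxx u x y
      = dirDeriv (1, 0) (dirDeriv (1, 0) (fun p : ℝ × ℝ => u p.1 p.2)) (x, y) := by
    simp only [pdxx, hx]
    exact (hasDerivAt_fst (hdd _) x y).deriv
  have hyy (x y : ℝ) : pdyy u x y
      = dirDeriv (0, 1) (dirDeriv (0, 1) (fun p : ℝ × ℝ => u p.1 p.2)) (x, y) := by
    simp only [pdyy, hy]
    exact (hasDerivAt_snd (hdd _) x y).deriv
  refine ⟨⟨hC, fun p => ?_, fun p => hb _ _⟩, fun p => ?_, ht, hbot⟩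
  · rw [← heq, hxx, hyy, hy]
    rfl
  · have := hpos p.1 p.2
    rwa [hy] at this

theorem isBddSol_const {f : ℝ → ℝ} {c k : ℝ} (hk : |k| ≤ 1) (hf : f k = 0) :
    IsBddSol f c (fun _ => k) where
  contDiff := contDiff_const
  eq p := by
    have h (a : ℝ × ℝ) (k : ℝ) : dirDeriv a (fun _ => k) = fun _ => 0 := by
      funext q
      simp [dirDeriv]
    simp [driftLaplacian, h, hf]
  bound _ := hk

namespace IsWave

variable {f : ℝ → ℝ} {c : ℝ} {w : ℝ × ℝ → ℝ}

theorem strictMono (hw : IsWave f c w) (x : ℝ) : StrictMono fun y => w (x, y) :=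
  strictMono_of_deriv_pos fun y => by
    rw [(hasDerivAt_snd hw.differentiable x y).deriv]
    exact hw.pos _

theorem locUnifZero_top (hw : IsWave f c w) :
    LocUnifZero atTop fun (Y : ℝ) p => w (p + (0, Y)) - 1 := by
  have h : TendstoLocallyUniformly (fun (Y : ℝ) (p : ℝ × ℝ) => w (p + (0, Y)))
      (fun _ => 1) atTop := by
    refine Monotone.tendstoLocallyUniformly_of_forall_tendsto (fun Y => ?_) ?_
      continuous_const ?_
    · exact hw.contDiff.continuous.comp (by fun_prop)
    · intro Y Z hYZ p
      have := (hw.strictMono p.1).monotone (add_le_add_right hYZ p.2)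
      simpa [Prod.add_def] using this
    · intro p
      have := (hw.tendsto_atTop p.1).comp (tendsto_atTop_add_const_left atTop p.2 tendsto_id)
      convert this using 2
      simp [Prod.add_def]
  intro R ε hε
  have := (tendstoLocallyUniformly_iff_forall_isCompact.1 h) _ (isCompact_closedBall (0 : ℝ × ℝ) R)
  filter_upwards [(Metric.tendstoUniformlyOn_iff.1 this) ε hε] with Y hY p hp
  have := hY p hp
  rw [dist_comm, Real.dist_eq] at this
  exact this.le

theorem locUnifZero_bot (hw : IsWave f c w) :
    LocUnifZero atTop fun (Y : ℝ) p => w (p + (0, -Y)) - (-1) := by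
  have h : TendstoLocallyUniformly (fun (Y : ℝ) (p : ℝ × ℝ) => w (p + (0, -Y)))
      (fun _ => -1) atTop := by
    refine Antitone.tendstoLocallyUniformly_of_forall_tendsto (fun Y => ?_) ?_
      continuous_const ?_
    · exact hw.contDiff.continuous.comp (by fun_prop)
    · intro Y Z hYZ p
      have := (hw.strictMono p.1).monotone (add_le_add_right (neg_le_neg hYZ) p.2)
      simpa [Prod.add_def] using this
    · intro p
      have := (hw.tendsto_atBot p.1).comp
        (tendsto_atBot_add_const_left atTop p.2 tendsto_neg_atTop_atBot)
      convert this using 2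
      simp [Prod.add_def]
  intro R ε hε
  have := (tendstoLocallyUniformly_iff_forall_isCompact.1 h) _ (isCompact_closedBall (0 : ℝ × ℝ) R)
  filter_upwards [(Metric.tendstoUniformlyOn_iff.1 this) ε hε] with Y hY p hp
  have := hY p hp
  rw [dist_comm, Real.dist_eq] at this
  exact this.le

theorem eventually_dirDeriv_top (hw : IsWave f c w) (hf : ContDiff ℝ 2 f) (h1 : f 1 = 0)
    {a : ℝ × ℝ} (ha : IsCoord a) (R : ℝ) {ε : ℝ} (hε : 0 < ε) :
    ∀ᶠ Y in atTop, ∀ x, |x| ≤ R → |dirDeriv a w (x, Y)| ≤ ε := by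
  have := locUnifZero_dirDeriv_sub hf (fun Y : ℝ => hw.comp_add_right (0, Y))
    (fun _ => isBddSol_const (c := c) (k := 1) (by simp) h1) hw.locUnifZero_top ha R ε hε
  filter_upwards [this] with Y hY x hx
  have := hY (x, 0) (by simpa [Prod.norm_def] using hx)
  rw [dirDeriv_comp_add_right] at this
  simpa [dirDeriv] using this

theorem eventually_dirDeriv_bot (hw : IsWave f c w) (hf : ContDiff ℝ 2 f) (h1 : f (-1) = 0)
    {a : ℝ × ℝ} (ha : IsCoord a) (R : ℝ) {ε : ℝ} (hε : 0 < ε) :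
    ∀ᶠ Y in atTop, ∀ x, |x| ≤ R → |dirDeriv a w (x, -Y)| ≤ ε := by
  have := locUnifZero_dirDeriv_sub hf (fun Y : ℝ => hw.comp_add_right (0, -Y))
    (fun _ => isBddSol_const (c := c) (k := -1) (by simp) h1) hw.locUnifZero_bot ha R ε hε
  filter_upwards [this] with Y hY x hx
  have := hY (x, 0) (by simpa [Prod.norm_def] using hx)
  rw [dirDeriv_comp_add_right] at this
  simpa [dirDeriv] using this

end IsWave

theorem _root_.BalancedDoubleWell.contDiff_deriv {F : ℝ → ℝ} (hF : BalancedDoubleWell F) :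
    ContDiff ℝ 2 (deriv F) :=
  ((contDiff_succ_iff_deriv (n := 2)).1 hF.1).2.2

theorem abs_sub_le_of_hasDerivAt {h h' : ℝ → ℝ} {K : ℝ} (hh : ∀ t, HasDerivAt h (h' t) t)
    (hK : ∀ t, |h' t| ≤ K) (a b : ℝ) : |h a - h b| ≤ K * |a - b| :=
  convex_univ.norm_image_sub_le_of_norm_hasDerivWithin_le
    (fun t _ => (hh t).hasDerivWithinAt) (fun t _ => hK t) trivial trivial

theorem abs_sub_le_of_dirDeriv_bounds {w : ℝ × ℝ → ℝ} (hw : Differentiable ℝ w) {K : ℝ}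
    (hK : ∀ a, IsCoord a → ∀ p, |dirDeriv a w p| ≤ K) (p q : ℝ × ℝ) :
    |w p - w q| ≤ K * |p.1 - q.1| + K * |p.2 - q.2| := by
  have h1 := abs_sub_le_of_hasDerivAt (fun t => hasDerivAt_fst hw t p.2)
    (fun t => hK _ isCoord_fst _) p.1 q.1
  have h2 := abs_sub_le_of_hasDerivAt (fun t => hasDerivAt_snd hw q.1 t)
    (fun t => hK _ isCoord_snd _) p.2 q.2
  exact (abs_sub_le _ (w (q.1, p.2)) _).trans (add_le_add h1 h2)

namespace IsWave

variable {F : ℝ → ℝ} {c : ℝ} {w : ℝ × ℝ → ℝ}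

/-- The second component of the flux in the Hamiltonian identity. -/
noncomputable def fluxY (F : ℝ → ℝ) (w : ℝ × ℝ → ℝ) (p : ℝ × ℝ) : ℝ :=
  2⁻¹ * (dirDeriv (0, 1) w p * dirDeriv (0, 1) w p)
    - 2⁻¹ * (dirDeriv (1, 0) w p * dirDeriv (1, 0) w p) - F (w p)

theorem integral_sq_Icc (hw : IsWave (deriv F) c w) (hF : BalancedDoubleWell F) {a b : ℝ × ℝ}
    (hab : a ≤ b) :
    c * ∫ p in Set.Icc a b, dirDeriv (0, 1) w p * dirDeriv (0, 1) w p =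
      (∫ x in a.1..b.1, fluxY F w (x, a.2)) - (∫ x in a.1..b.1, fluxY F w (x, b.2))
        + (∫ y in a.2..b.2, dirDeriv (1, 0) w (a.1, y) * dirDeriv (0, 1) w (a.1, y))
        - ∫ y in a.2..b.2, dirDeriv (1, 0) w (b.1, y) * dirDeriv (0, 1) w (b.1, y) := by
  have dx := hw.differentiable_dirDeriv (1, 0)
  have dy := hw.differentiable_dirDeriv (0, 1)
  have dF : Differentiable ℝ F := hF.1.differentiable (by norm_num)
  have dFw : Differentiable ℝ fun p => F (w p) := dF.comp hw.differentiable
  have dP : Differentiable ℝ fun p => dirDeriv (1, 0) w p * dirDeriv (0, 1) w p := dx.mul dy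
  have dxx : Differentiable ℝ fun p => dirDeriv (1, 0) w p * dirDeriv (1, 0) w p := dx.mul dx
  have dyy : Differentiable ℝ fun p => dirDeriv (0, 1) w p * dirDeriv (0, 1) w p := dy.mul dy
  have dkin : Differentiable ℝ fun p => 2⁻¹ * (dirDeriv (0, 1) w p * dirDeriv (0, 1) w p)
      - 2⁻¹ * (dirDeriv (1, 0) w p * dirDeriv (1, 0) w p) :=
    (dyy.const_mul _).sub (dxx.const_mul _)
  have dQ : Differentiable ℝ (fluxY F w) := dkin.sub dFw
  have hdiv (p : ℝ × ℝ) :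
      fderiv ℝ (fun p => dirDeriv (1, 0) w p * dirDeriv (0, 1) w p) p (1, 0)
        + fderiv ℝ (fluxY F w) p (0, 1)
      = -c * (dirDeriv (0, 1) w p * dirDeriv (0, 1) w p) := by
    change dirDeriv (1, 0) (fun p => dirDeriv (1, 0) w p * dirDeriv (0, 1) w p) p
      + dirDeriv (0, 1) (fun p => 2⁻¹ * (dirDeriv (0, 1) w p * dirDeriv (0, 1) w p)
        - 2⁻¹ * (dirDeriv (1, 0) w p * dirDeriv (1, 0) w p) - F (w p)) p = _
    rw [dirDeriv_mul (dx p) (dy p),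
      dirDeriv_sub (dkin p) (dFw p), dirDeriv_sub (dyy.const_mul _ p) (dxx.const_mul _ p),
      dirDeriv_const_mul (dyy p), dirDeriv_const_mul (dxx p),
      dirDeriv_mul (dx p) (dx p), dirDeriv_mul (dy p) (dy p),
      dirDeriv_comp (dF _) (hw.differentiable p), dirDeriv_comm hw.contDiff_two (0, 1) (1, 0),
      ← hw.eq]
    unfold driftLaplacian
    ring
  have := integral_divergence_prod_Icc_of_hasFDerivAt_of_le _ _ _ _ a b hab
    dP.continuous.continuousOn dQ.continuous.continuousOn
    (fun p _ => (dP p).hasFDerivAt) (fun p _ => (dQ p).hasFDerivAt) (by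
      simp only [hdiv]
      exact ((dy.continuous.mul dy.continuous).const_smul (-c)).continuousOn.integrableOn_compact
        isCompact_Icc)
  simp only [hdiv] at this
  rw [integral_const_mul] at this
  linarith

theorem abs_integral_flux_le (hw : IsWave (deriv F) c w) {K : ℝ}
    (hK : ∀ p, |dirDeriv (1, 0) w p| ≤ K) (x : ℝ) {a b : ℝ} (hab : a ≤ b) :
    |∫ y in a..b, dirDeriv (1, 0) w (x, y) * dirDeriv (0, 1) w (x, y)| ≤ K * 2 := by
  have hK0 : 0 ≤ K := (abs_nonneg _).trans (hK 0)
  have cy : Continuous fun y => dirDeriv (0, 1) w (x, y) :=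
    (hw.differentiable_dirDeriv _).continuous.comp (by fun_prop)
  have := intervalIntegral.norm_integral_le_of_norm_le (μ := volume)
    (f := fun y => dirDeriv (1, 0) w (x, y) * dirDeriv (0, 1) w (x, y))
    (g := fun y => K * dirDeriv (0, 1) w (x, y)) hab
    (Eventually.of_forall fun y _ => by
      rw [norm_mul, Real.norm_eq_abs, Real.norm_eq_abs, abs_of_pos (hw.pos _)]
      exact mul_le_mul_of_nonneg_right (hK _) (hw.pos _).le)
    ((cy.const_smul K).intervalIntegrable _ _)
  refine this.trans ?_
  rw [intervalIntegral.integral_const_mul,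
    intervalIntegral.integral_eq_sub_of_hasDerivAt (fun y _ => hasDerivAt_snd hw.differentiable x y)
      (cy.intervalIntegrable _ _)]
  refine mul_le_mul_of_nonneg_left ?_ hK0
  linarith [(hw.mem_Icc (x, b)).2, (hw.mem_Icc (x, a)).1]

theorem eventually_abs_fluxY_le (hw : IsWave (deriv F) c w) (hF : BalancedDoubleWell F) (R : ℝ)
    {ε : ℝ} (hε : 0 < ε) :
    ∀ᶠ Y in atTop, ∀ x, |x| ≤ R → |fluxY F w (x, Y)| ≤ ε ∧ |fluxY F w (x, -Y)| ≤ ε := by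
  have hf := hF.contDiff_deriv
  obtain ⟨hF3, f1, f2, -, -, -, -, F1, F2⟩ := hF
  have cF : Continuous F := hF3.continuous
  obtain ⟨δ1, hδ1, h1⟩ := Metric.continuousAt_iff.1 (cF.continuousAt (x := 1)) (ε / 2) (by positivity)
  obtain ⟨δ2, hδ2, h2⟩ := Metric.continuousAt_iff.1 (cF.continuousAt (x := -1)) (ε / 2) (by positivity)
  have hm : 0 < min 1 (ε / 2) := lt_min one_pos (by positivity)
  have hlin {q : ℝ} (hq : |q| ≤ min 1 (ε / 2)) : 0 ≤ q * q ∧ q * q ≤ ε / 2 := by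
    refine ⟨mul_self_nonneg q, ?_⟩
    rw [← abs_mul_abs_self]
    calc |q| * |q| ≤ 1 * (ε / 2) := mul_le_mul (hq.trans (min_le_left _ _))
          (hq.trans (min_le_right _ _)) (abs_nonneg _) (by norm_num)
      _ = ε / 2 := one_mul _
  have comb {q r s : ℝ} (hq : |q| ≤ min 1 (ε / 2)) (hr : |r| ≤ min 1 (ε / 2)) (hs : |s| < ε / 2) :
      |2⁻¹ * (q * q) - 2⁻¹ * (r * r) - s| ≤ ε := by
    obtain ⟨q0, q1⟩ := hlin hq
    obtain ⟨r0, r1⟩ := hlin hr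
    rw [abs_lt] at hs
    rw [abs_le]
    constructor <;> linarith [hs.1, hs.2]
  filter_upwards [hw.eventually_dirDeriv_top hf f2 isCoord_fst R hm,
    hw.eventually_dirDeriv_top hf f2 isCoord_snd R hm,
    hw.eventually_dirDeriv_bot hf f1 isCoord_fst R hm,
    hw.eventually_dirDeriv_bot hf f1 isCoord_snd R hm,
    hw.locUnifZero_top R (δ1 / 2) (by positivity), hw.locUnifZero_bot R (δ2 / 2) (by positivity)]
    with Y a1 a2 b1 b2 t1 t2 x hx
  have hx' : ((x, 0) : ℝ × ℝ) ∈ closedBall (0 : ℝ × ℝ) R := by simpa [Prod.norm_def] using hx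
  refine ⟨comb (a2 x hx) (a1 x hx) ?_, comb (b2 x hx) (b1 x hx) ?_⟩
  · have := @h1 (w (x, Y)) (by
      have := t1 _ hx'
      simp only [Prod.mk_add_mk, add_zero, zero_add] at this
      rw [Real.dist_eq]
      linarith)
    rwa [Real.dist_eq, F2, sub_zero] at this
  · have := @h2 (w (x, -Y)) (by
      have := t2 _ hx'
      simp only [Prod.mk_add_mk, add_zero, zero_add] at this
      rw [Real.dist_eq]
      linarith)
    rwa [Real.dist_eq, F1, sub_zero] at this

/-- The wave has finite Dirichlet energy in the direction of propagation. -/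
theorem integrable_sq (hw : IsWave (deriv F) c w) (hF : BalancedDoubleWell F) (hc : 0 < c) :
    Integrable fun p => dirDeriv (0, 1) w p * dirDeriv (0, 1) w p := by
  obtain ⟨K, hK0, hK⟩ := exists_deriv_bounds hF.contDiff_deriv c
  have hKx (p : ℝ × ℝ) : |dirDeriv (1, 0) w p| ≤ K := (hK w hw.toIsBddSol _ isCoord_fst p).1
  have hY (n : ℕ) : ∃ Y : ℝ, (n : ℝ) ≤ Y ∧ ∀ x : ℝ, |x| ≤ n →
      |fluxY F w (x, Y)| ≤ ((n : ℝ) + 1)⁻¹ ∧ |fluxY F w (x, -Y)| ≤ ((n : ℝ) + 1)⁻¹ :=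
    ((eventually_ge_atTop (n : ℝ)).and
      (hw.eventually_abs_fluxY_le hF n (by positivity))).exists
  choose Y hYn hY using hY
  have cont : Continuous fun p => dirDeriv (0, 1) w p * dirDeriv (0, 1) w p :=
    (hw.differentiable_dirDeriv _).continuous.mul (hw.differentiable_dirDeriv _).continuous
  have cover : AECover (volume : Measure (ℝ × ℝ)) atTop
      fun n : ℕ => Set.Icc (-(n : ℝ), -Y n) ((n : ℝ), Y n) := by
    refine ⟨Eventually.of_forall fun p => ?_, fun n => measurableSet_Icc⟩
    filter_upwards [tendsto_natCast_atTop_atTop.eventually_ge_atTop (|p.1| ⊔ |p.2|)] with n hn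
    have h1 := abs_le.1 ((le_max_left _ _).trans hn)
    have h2 := abs_le.1 ((le_max_right _ _).trans (hn.trans (hYn n)))
    exact ⟨⟨h1.1, h2.1⟩, ⟨h1.2, h2.2⟩⟩
  refine cover.integrable_of_integral_norm_bounded (c⁻¹ * (4 * K + 4))
    (fun n => cont.continuousOn.integrableOn_compact isCompact_Icc) (Eventually.of_forall fun n => ?_)
  have hn0 : (0 : ℝ) ≤ n := Nat.cast_nonneg n
  have hYn' : -Y n ≤ Y n := by linarith [hYn n]
  have id := hw.integral_sq_Icc hF (a := (-(n : ℝ), -Y n)) (b := ((n : ℝ), Y n))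
    ⟨by simp, hYn'⟩
  have hflux {e : ℝ} (he : ∀ x : ℝ, |x| ≤ n → |fluxY F w (x, e)| ≤ ((n : ℝ) + 1)⁻¹) :
      |∫ x in (-(n : ℝ))..n, fluxY F w (x, e)| ≤ 2 := by
    refine (intervalIntegral.norm_integral_le_of_norm_le_const (f := fun x => fluxY F w (x, e))
      (C := ((n : ℝ) + 1)⁻¹) fun x hx => ?_).trans ?_
    · rw [Set.uIoc_of_le (by linarith)] at hx
      exact he x (abs_le.2 ⟨hx.1.le, hx.2⟩)
    · rw [abs_of_nonneg (by linarith), inv_mul_le_iff₀ (by positivity)]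
      linarith
  have e1 := abs_le.1 (hflux fun x hx => (hY n x hx).1)
  have e2 := abs_le.1 (hflux fun x hx => (hY n x hx).2)
  have e3 := abs_le.1 (hw.abs_integral_flux_le hKx (-(n : ℝ)) hYn')
  have e4 := abs_le.1 (hw.abs_integral_flux_le hKx (n : ℝ) hYn')
  have hnorm : ∫ p in Set.Icc (-(n : ℝ), -Y n) ((n : ℝ), Y n),
      ‖dirDeriv (0, 1) w p * dirDeriv (0, 1) w p‖
      = ∫ p in Set.Icc (-(n : ℝ), -Y n) ((n : ℝ), Y n),
        dirDeriv (0, 1) w p * dirDeriv (0, 1) w p :=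
    integral_congr_ae (Eventually.of_forall fun p => by
      simp only [Real.norm_eq_abs, abs_mul_self])
  rw [hnorm, le_inv_mul_iff₀ hc]
  simp only at id
  linarith [e1.1, e1.2, e2.1, e2.2, e3.1, e3.2, e4.1, e4.2]

theorem exists_dirDeriv_snd_le (hw : IsWave (deriv F) c w) (hF : BalancedDoubleWell F) (hc : 0 < c)
    {δ : ℝ} (hδ : 0 < δ) : ∃ X, ∀ p : ℝ × ℝ, X ≤ |p.1| → dirDeriv (0, 1) w p ≤ δ := by
  obtain ⟨K, hK0, hK⟩ := exists_deriv_bounds hF.contDiff_deriv c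
  have hint := hw.integrable_sq hF hc
  set r : ℝ := min 1 (δ / (4 * (K + 1))) with hr
  have hr0 : 0 < r := lt_min one_pos (by positivity)
  have hrK : K * r ≤ δ / 4 := by
    have : r * (4 * (K + 1)) ≤ δ := (le_div_iff₀ (by positivity)).1 (min_le_right _ _)
    nlinarith
  have hlim := tendsto_setIntegral_of_antitone (μ := volume)
    (f := fun p => dirDeriv (0, 1) w p * dirDeriv (0, 1) w p)
    (s := fun n : ℕ => {p : ℝ × ℝ | (n : ℝ) ≤ |p.1|})
    (fun n => (isClosed_le continuous_const (by fun_prop)).measurableSet)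
    (fun m n hmn p hp => le_trans (α := ℝ) (Nat.cast_le.2 hmn) hp) ⟨0, hint.integrableOn⟩
  have hempty : ⋂ n : ℕ, {p : ℝ × ℝ | (n : ℝ) ≤ |p.1|} = ∅ := by
    refine Set.eq_empty_of_forall_notMem fun p hp => ?_
    obtain ⟨n, hn⟩ := exists_nat_gt |p.1|
    exact (not_le.2 hn) (Set.mem_iInter.1 hp n)
  rw [hempty, setIntegral_empty] at hlim
  obtain ⟨n, hn⟩ := (hlim.eventually_lt_const
    (show (0 : ℝ) < (δ / 2 * (δ / 2)) * (2 * r * (2 * r)) by positivity)).exists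
  refine ⟨n + 1, fun p hp => ?_⟩
  by_contra! hlt
  have hvol : volume.real (closedBall p r) = 2 * r * (2 * r) := by
    rw [← closedBall_prod_same p.1 p.2 r, Measure.volume_eq_prod, measureReal_prod_prod,
      Real.volume_real_closedBall hr0.le, Real.volume_real_closedBall hr0.le]
  have hlow : (δ / 2 * (δ / 2)) * volume.real (closedBall p r)
      ≤ ∫ q in closedBall p r, dirDeriv (0, 1) w q * dirDeriv (0, 1) w q := by
    refine setIntegral_ge_of_const_le_real measurableSet_closedBall
      (isCompact_closedBall p r).measure_lt_top.ne (fun q hq => ?_) hint.integrableOn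
    have hd := abs_sub_le_of_dirDeriv_bounds (hw.differentiable_dirDeriv (0, 1))
      (fun a ha p => (hK w hw.toIsBddSol _ isCoord_snd p).2 a ha) p q
    rw [mem_closedBall, dist_comm, Prod.dist_eq, max_le_iff, Real.dist_eq, Real.dist_eq] at hq
    have h1 := mul_le_mul_of_nonneg_left hq.1 hK0
    have h2 := mul_le_mul_of_nonneg_left hq.2 hK0
    have : δ / 2 ≤ dirDeriv (0, 1) w q := by linarith [(abs_le.1 hd).2]
    exact mul_self_le_mul_self (by positivity) this
  have hmono : ∫ q in closedBall p r, dirDeriv (0, 1) w q * dirDeriv (0, 1) w q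
      ≤ ∫ q in {p : ℝ × ℝ | (n : ℝ) ≤ |p.1|}, dirDeriv (0, 1) w q * dirDeriv (0, 1) w q := by
    refine setIntegral_mono_set hint.integrableOn
      (Eventually.of_forall fun q => mul_self_nonneg _) (LE.le.eventuallyLE ?_)
    intro q hq
    rw [mem_closedBall, dist_comm, Prod.dist_eq, max_le_iff, Real.dist_eq] at hq
    have := abs_sub_abs_le_abs_sub p.1 q.1
    have := min_le_left 1 (δ / (4 * (K + 1)))
    change (n : ℝ) ≤ |q.1|
    linarith [hq.1]
  rw [hvol] at hlow
  linarith

theorem exists_abs_dirDeriv_snd_le (hw : IsWave (deriv F) c w) (hF : BalancedDoubleWell F)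
    (hc : 0 < c) {δ : ℝ} (hδ : 0 < δ) : ∃ X, ∀ p : ℝ × ℝ, X ≤ |p.1| →
      |dirDeriv (0, 1) w p| ≤ δ ∧ |dirDeriv (0, 1) (dirDeriv (0, 1) w) p| ≤ δ := by
  have hf := hF.contDiff_deriv
  obtain ⟨K1, hK1, h1⟩ := exists_abs_le_of_continuous (hf.continuous_deriv (by norm_num))
  obtain ⟨b, hb⟩ := isCoord_snd.exists_isCoordPair
  set A := (2 + |c|) * (1 + K1) with hA
  have hA1 : 1 ≤ A := by nlinarith [abs_nonneg c]
  obtain ⟨X, hX⟩ := hw.exists_dirDeriv_snd_le hF hc (show 0 < δ / A by positivity)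
  have hX' (p : ℝ × ℝ) (hp : X ≤ |p.1|) : |dirDeriv (0, 1) w p| ≤ δ / A := by
    rw [abs_of_pos (hw.pos p)]
    exact hX p hp
  refine ⟨X + 2, fun p hp => ⟨(hX' p (by linarith)).trans (div_le_self hδ.le hA1), ?_⟩⟩
  have hball (q : ℝ × ℝ) (hq : q ∈ closedBall p 2) : X ≤ |q.1| := by
    rw [mem_closedBall, dist_comm, Prod.dist_eq, max_le_iff, Real.dist_eq] at hq
    linarith [abs_sub_abs_le_abs_sub p.1 q.1, hq.1]
  have := abs_dirDeriv_le c (hw.contDiff_dirDeriv (0, 1)) (p := p) (M := δ / A) (N := K1 * (δ / A))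
    (fun q hq => hX' q (hball q hq)) (fun q hq => by
      rw [hw.driftLaplacian_dirDeriv hf, abs_mul]
      exact mul_le_mul (h1 _ (hw.mem_Icc q)) (hX' q (hball q hq)) (abs_nonneg _) hK1) hb
  refine this.trans_eq ?_
  have : A ≠ 0 := by positivity
  calc (2 + |c|) * (δ / A + K1 * (δ / A)) = A * (δ / A) := by rw [hA]; ring
    _ = δ := mul_div_cancel₀ δ this

end IsWave

/-- Arzelà–Ascoli for uniformly bounded, uniformly Lipschitz functions on the line. -/
theorem exists_subseq_tendstoLocallyUniformly {B K : ℝ} {h : ℕ → ℝ → ℝ} (hb : ∀ m x, |h m x| ≤ B)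
    (hK : ∀ m x y, |h m x - h m y| ≤ K * |x - y|) :
    ∃ φ : ℕ → ℕ, StrictMono φ ∧ ∃ V : ℝ → ℝ,
      TendstoLocallyUniformly (fun m => h (φ m)) V atTop := by
  have hlip {v : ℝ → ℝ} (hv : ∀ x y, |v x - v y| ≤ K * |x - y|) : LipschitzWith K.toNNReal v :=
    LipschitzWith.of_dist_le' fun x y => by simpa [Real.dist_eq] using hv x y
  set S : Set C(ℝ, ℝ) := {v | (∀ x, v x ∈ Set.Icc (-B) B) ∧ ∀ x y, |v x - v y| ≤ K * |x - y|}
    with hS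
  have himage : ContinuousMap.toFun '' S
      = Set.univ.pi (fun _ : ℝ => Set.Icc (-B) B)
        ∩ {v : ℝ → ℝ | ∀ x y, |v x - v y| ≤ K * |x - y|} := by
    ext v
    constructor
    · rintro ⟨w, hw, rfl⟩
      exact ⟨fun x _ => hw.1 x, hw.2⟩
    · rintro ⟨h1, h2⟩
      exact ⟨⟨v, (hlip h2).continuous⟩, ⟨fun x => h1 x trivial, h2⟩, rfl⟩
  have hclosed : IsClosed {v : ℝ → ℝ | ∀ x y, |v x - v y| ≤ K * |x - y|} := by
    simp only [Set.ofPred_forall]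
    exact isClosed_iInter fun x => isClosed_iInter fun y =>
      isClosed_le (by fun_prop) continuous_const
  have hcompact : IsCompact S := by
    refine ArzelaAscoli.isCompact_of_equicontinuous S ?_ ?_
    · rw [himage]
      exact (isCompact_univ_pi fun _ => isCompact_Icc).inter_right hclosed
    · refine (LipschitzWith.uniformEquicontinuous _ K.toNNReal fun v => ?_).equicontinuous
      exact hlip v.2.2
  obtain ⟨V, -, φ, hφ, hV⟩ := hcompact.tendsto_subseq
    (x := fun m => (⟨h m, (hlip (hK m)).continuous⟩ : C(ℝ, ℝ)))
    (fun m => ⟨fun x => abs_le.1 (hb m x), hK m⟩)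
  exact ⟨φ, hφ, V, (ContinuousMap.tendsto_iff_tendstoLocallyUniformly.1 hV)⟩

theorem abs_sub_le_on_Icc {f : ℝ → ℝ} (hf : ContDiff ℝ 1 f) :
    ∃ K, 0 ≤ K ∧ ∀ a ∈ Set.Icc (-1 : ℝ) 1, ∀ b ∈ Set.Icc (-1 : ℝ) 1, |f a - f b| ≤ K * |a - b| := by
  obtain ⟨K, hK0, hK⟩ := exists_abs_le_of_continuous (hf.continuous_deriv le_rfl)
  exact ⟨K, hK0, fun a ha b hb => (convex_Icc (-1 : ℝ) 1).norm_image_sub_le_of_norm_deriv_le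
    (fun t _ => hf.differentiable (by norm_num) t) hK hb ha⟩

/-- A bounded solution `V` of the one-dimensional equation `V'' = f(V)`, with derivative `V₁`. -/
structure IsProfile (f V V₁ : ℝ → ℝ) : Prop where
  hasDerivAt : ∀ x, HasDerivAt V (V₁ x) x
  hasDerivAt_deriv : ∀ x, HasDerivAt V₁ (f (V x)) x
  bound : ∀ x, |V x| ≤ 1

/-- Along points going to infinity horizontally, horizontal slices of a wave converge to
one-dimensional profiles. -/
theorem IsWave.exists_profile {F : ℝ → ℝ} {c : ℝ} {w : ℝ × ℝ → ℝ} (hw : IsWave (deriv F) c w)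
    (hF : BalancedDoubleWell F) (hc : 0 < c) {x y : ℕ → ℝ}
    (hx : Tendsto (fun m => |x m|) atTop atTop) :
    ∃ φ : ℕ → ℕ, StrictMono φ ∧ ∃ V V₁, IsProfile (deriv F) V V₁ ∧
      TendstoLocallyUniformly (fun m t => w (x (φ m) + t, y (φ m))) V atTop ∧
      Tendsto (fun m => dirDeriv (1, 0) w (x (φ m), y (φ m))) atTop (nhds (V₁ 0)) := by
  obtain ⟨K, hK0, hK⟩ := exists_deriv_bounds hF.contDiff_deriv c
  have hslice {v : ℝ × ℝ → ℝ} (hv : Differentiable ℝ v) (a b t : ℝ) :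
      HasDerivAt (fun t => v (a + t, b)) (dirDeriv (1, 0) v (a + t, b)) t :=
    (hasDerivAt_fst hv (a + t) b).comp_const_add a t
  have h0 (m : ℕ) := hslice hw.differentiable (x m) (y m)
  have h1 (m : ℕ) := hslice (hw.differentiable_dirDeriv (1, 0)) (x m) (y m)
  obtain ⟨φ, hφ, V, hV⟩ := exists_subseq_tendstoLocallyUniformly (K := K)
    (h := fun m t => w (x m + t, y m)) (fun m t => hw.bound _)
    (fun m => abs_sub_le_of_hasDerivAt (h0 m) fun t => (hK w hw.toIsBddSol _ isCoord_fst _).1)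
  obtain ⟨ψ, hψ, V₁, hV₁⟩ := exists_subseq_tendstoLocallyUniformly (K := K)
    (h := fun m t => dirDeriv (1, 0) w (x (φ m) + t, y (φ m)))
    (fun m t => (hK w hw.toIsBddSol _ isCoord_fst _).1)
    (fun m => abs_sub_le_of_hasDerivAt (h1 (φ m)) fun t =>
      (hK w hw.toIsBddSol _ isCoord_fst _).2 _ isCoord_fst)
  have hV' : TendstoLocallyUniformly (fun m t => w (x (φ (ψ m)) + t, y (φ (ψ m)))) V atTop := by
    intro u hu t
    obtain ⟨s, hs, h⟩ := hV u hu t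
    exact ⟨s, hs, hψ.tendsto_atTop.eventually h⟩
  have hpt {h : ℕ → ℝ → ℝ} {v : ℝ → ℝ} (h' : TendstoLocallyUniformly h v atTop) (t : ℝ) :
      Tendsto (fun m => h m t) atTop (nhds (v t)) :=
    (tendstoLocallyUniformlyOn_univ.2 h').tendsto_at trivial
  have hbound (t : ℝ) : |V t| ≤ 1 :=
    le_of_tendsto (hpt hV' t).abs (Eventually.of_forall fun m => hw.bound _)
  have hx' : Tendsto (fun m => |x (φ (ψ m))|) atTop atTop :=
    hx.comp (hφ.comp hψ).tendsto_atTop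
  obtain ⟨L, hL0, hL⟩ := abs_sub_le_on_Icc (hF.contDiff_deriv.of_le (by norm_num))
  have hV₂ : TendstoLocallyUniformly
      (fun m t => dirDeriv (1, 0) (dirDeriv (1, 0) w) (x (φ (ψ m)) + t, y (φ (ψ m))))
      (fun t => deriv F (V t)) atTop := by
    rw [Metric.tendstoLocallyUniformly_iff] at hV' ⊢
    intro ε hε t₀
    obtain ⟨s, hs, hVs⟩ := hV' (ε / (2 * (L + 1))) (by positivity) t₀
    obtain ⟨X, hX⟩ := hw.exists_abs_dirDeriv_snd_le hF hc
      (show 0 < ε / (2 * (1 + c)) by positivity)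
    refine ⟨s ∩ ball t₀ 1, inter_mem hs (ball_mem_nhds _ one_pos), ?_⟩
    filter_upwards [hVs, hx'.eventually_ge_atTop (X + |t₀| + 1)] with m hm hxm t ht
    have hfar : X ≤ |x (φ (ψ m)) + t| := by
      have h1 := ht.2
      rw [mem_ball, Real.dist_eq] at h1
      have h2 := abs_sub_abs_le_abs_sub t t₀
      have h3 := abs_sub_abs_le_abs_sub (x (φ (ψ m))) (-t)
      rw [sub_neg_eq_add, abs_neg] at h3
      linarith
    obtain ⟨e1, e2⟩ := hX (x (φ (ψ m)) + t, y (φ (ψ m))) hfar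
    have e3 := hL _ (abs_le.1 (hbound t)) _ (hw.mem_Icc (x (φ (ψ m)) + t, y (φ (ψ m))))
    have e4 := hm t ht.1
    rw [Real.dist_eq] at e4 ⊢
    have heq := hw.eq (x (φ (ψ m)) + t, y (φ (ψ m)))
    unfold driftLaplacian at heq
    have e5 : L * |V t - w (x (φ (ψ m)) + t, y (φ (ψ m)))| < ε / 2 := by
      calc _ ≤ (L + 1) * |V t - w (x (φ (ψ m)) + t, y (φ (ψ m)))| := by
            gcongr
            linarith
        _ < (L + 1) * (ε / (2 * (L + 1))) := by gcongr
        _ = ε / 2 := by field_simp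
    have e6 : (1 + c) * (ε / (2 * (1 + c))) = ε / 2 := by field_simp
    have e7 : c * |dirDeriv (0, 1) w (x (φ (ψ m)) + t, y (φ (ψ m)))|
        ≤ c * (ε / (2 * (1 + c))) := mul_le_mul_of_nonneg_left e1 hc.le
    calc |deriv F (V t) - dirDeriv (1, 0) (dirDeriv (1, 0) w) (x (φ (ψ m)) + t, y (φ (ψ m)))|
        = |(deriv F (V t) - deriv F (w (x (φ (ψ m)) + t, y (φ (ψ m)))))
          + (dirDeriv (0, 1) (dirDeriv (0, 1) w) (x (φ (ψ m)) + t, y (φ (ψ m)))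
            + c * dirDeriv (0, 1) w (x (φ (ψ m)) + t, y (φ (ψ m))))| := by
          congr 1
          linarith
      _ ≤ L * |V t - w (x (φ (ψ m)) + t, y (φ (ψ m)))| + (ε / (2 * (1 + c))
            + c * |dirDeriv (0, 1) w (x (φ (ψ m)) + t, y (φ (ψ m)))|) := by
          refine (abs_add_le _ _).trans (add_le_add e3 ((abs_add_le _ _).trans ?_))
          rw [abs_mul, abs_of_pos hc]
          exact add_le_add e2 le_rfl
      _ < ε := by linarith
  refine ⟨φ ∘ ψ, hφ.comp hψ, V, V₁, ⟨fun t => ?_, fun t => ?_, hbound⟩, hV', ?_⟩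
  · exact hasDerivAt_of_tendstoLocallyUniformlyOn isOpen_univ
      (tendstoLocallyUniformlyOn_univ.2 hV₁) (Eventually.of_forall fun m t _ => h0 (φ (ψ m)) t)
      (fun t _ => hpt hV' t) trivial
  · exact hasDerivAt_of_tendstoLocallyUniformlyOn isOpen_univ
      (tendstoLocallyUniformlyOn_univ.2 hV₂) (Eventually.of_forall fun m t _ => h1 (φ (ψ m)) t)
      (fun t _ => hpt hV₁ t) trivial
  · simpa using hpt hV₁ 0

theorem _root_.BalancedDoubleWell.differentiable {F : ℝ → ℝ} (hF : BalancedDoubleWell F) :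
    Differentiable ℝ F :=
  hF.1.differentiable (by norm_num)

theorem _root_.BalancedDoubleWell.monotoneOn {F : ℝ → ℝ} (hF : BalancedDoubleWell F) :
    MonotoneOn F (Set.Icc (-1) 0) :=
  monotoneOn_of_deriv_nonneg (convex_Icc _ _) hF.1.continuous.continuousOn
    hF.differentiable.differentiableOn fun s hs => by
      rw [interior_Icc] at hs
      exact (hF.2.2.2.2.2.1 s hs).le

theorem _root_.BalancedDoubleWell.antitoneOn {F : ℝ → ℝ} (hF : BalancedDoubleWell F) :
    AntitoneOn F (Set.Icc 0 1) :=
  antitoneOn_of_deriv_nonpos (convex_Icc _ _) hF.1.continuous.continuousOn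
    hF.differentiable.differentiableOn fun s hs => by
      rw [interior_Icc] at hs
      exact (hF.2.2.2.2.2.2.1 s hs).le

theorem _root_.BalancedDoubleWell.nonneg {F : ℝ → ℝ} (hF : BalancedDoubleWell F) {s : ℝ}
    (hs : |s| ≤ 1) : 0 ≤ F s := by
  obtain ⟨h1, h2⟩ := abs_le.1 hs
  rcases le_total s 0 with h | h
  · rw [← hF.2.2.2.2.2.2.2.1]
    exact hF.monotoneOn ⟨le_rfl, by norm_num⟩ ⟨h1, h⟩ h1
  · rw [← hF.2.2.2.2.2.2.2.2]
    exact hF.antitoneOn ⟨h, h2⟩ ⟨by norm_num, le_rfl⟩ h2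

/-- A bounded function on a half-line cannot have derivative bounded away from zero. -/
theorem false_of_le_abs_deriv {V V₁ : ℝ → ℝ} (hV : ∀ x, HasDerivAt V (V₁ x) x)
    (hc : Continuous V₁) (hb : ∀ x, |V x| ≤ 1) {δ x₀ : ℝ} (hδ : 0 < δ)
    (h : ∀ x, x₀ ≤ x → δ ≤ |V₁ x|) : False := by
  have hpos {V V₁ : ℝ → ℝ} (hV : ∀ x, HasDerivAt V (V₁ x) x)
      (hc : Continuous V₁) (hb : ∀ x, |V x| ≤ 1) (h : ∀ x, x₀ ≤ x → δ ≤ |V₁ x|)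
      (h0 : 0 ≤ V₁ x₀) : False := by
    have hge (x : ℝ) (hx : x₀ ≤ x) : δ ≤ V₁ x := by
      rcases le_total 0 (V₁ x) with h' | h'
      · rw [← abs_of_nonneg h']
        exact h x hx
      · obtain ⟨t, ht, ht'⟩ := intermediate_value_Icc' hx hc.continuousOn ⟨h', h0⟩
        have := h t ht.1
        rw [ht', abs_zero] at this
        linarith
    have := (convex_Ici x₀).mul_sub_le_image_sub_of_le_deriv (f := V) (C := δ)
      (HasDerivAt.continuousOn fun x _ => hV x)
      (fun x _ => (hV x).differentiableAt.differentiableWithinAt)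
      (fun x hx => by
        rw [(hV x).deriv]
        exact hge x (interior_subset hx))
      x₀ Set.self_mem_Ici (x₀ + 3 / δ) (Set.mem_Ici.2 (by linarith [show 0 < 3 / δ by positivity]))
      (by linarith [show 0 < 3 / δ by positivity])
    rw [add_sub_cancel_left, mul_div_cancel₀ _ hδ.ne'] at this
    linarith [(abs_le.1 (hb (x₀ + 3 / δ))).2, (abs_le.1 (hb x₀)).1]
  rcases le_total 0 (V₁ x₀) with h0 | h0
  · exact hpos hV hc hb h h0
  · exact hpos (V := fun x => -V x) (V₁ := fun x => -V₁ x) (fun x => (hV x).neg) hc.neg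
      (fun x => by simpa using hb x) (fun x hx => by simpa using h x hx) (by simpa using h0)

namespace IsProfile

variable {f V V₁ : ℝ → ℝ}

theorem continuous_deriv (hV : IsProfile f V V₁) : Continuous V₁ :=
  continuous_iff_continuousAt.2 fun x => (hV.hasDerivAt_deriv x).continuousAt

theorem continuous (hV : IsProfile f V V₁) : Continuous V :=
  continuous_iff_continuousAt.2 fun x => (hV.hasDerivAt x).continuousAt

theorem comp_neg (hV : IsProfile f V V₁) :
    IsProfile f (fun x => V (-x)) (fun x => -V₁ (-x)) where
  hasDerivAt x := ((hV.hasDerivAt (-x)).scomp x (hasDerivAt_neg x)).congr_deriv (by simp)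
  hasDerivAt_deriv x :=
    (((hV.hasDerivAt_deriv (-x)).scomp x (hasDerivAt_neg x)).neg).congr_deriv (by simp)
  bound x := hV.bound _

end IsProfile

/-- The energy `V'²/2 - F(V)` is conserved. -/
theorem energy_eq {F V V₁ : ℝ → ℝ} (hF : Differentiable ℝ F) (hV : ∀ x, HasDerivAt V (V₁ x) x)
    (hV₁ : ∀ x, HasDerivAt V₁ (deriv F (V x)) x) (x y : ℝ) :
    V₁ x * V₁ x / 2 - F (V x) = V₁ y * V₁ y / 2 - F (V y) := by
  have hd (x : ℝ) : HasDerivAt (fun x => V₁ x * V₁ x / 2 - F (V x)) 0 x :=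
    ((((hV₁ x).fun_mul (hV₁ x)).div_const 2).fun_sub
      ((hF (V x)).hasDerivAt.comp x (hV x))).congr_deriv (by ring)
  exact is_const_of_deriv_eq_zero (fun x => (hd x).differentiableAt) (fun x => (hd x).deriv) x y

namespace IsProfile

variable {F V V₁ W W₁ : ℝ → ℝ}

theorem energy_nonpos (hF : BalancedDoubleWell F) (hV : IsProfile (deriv F) V V₁) :
    V₁ 0 * V₁ 0 / 2 - F (V 0) ≤ 0 := by
  by_contra! hE
  refine false_of_le_abs_deriv hV.hasDerivAt hV.continuous_deriv hV.bound (x₀ := 0)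
    (Real.sqrt_pos.2 (mul_pos two_pos hE)) fun x _ => Real.sqrt_le_iff.2 ⟨abs_nonneg _, ?_⟩
  rw [sq_abs]
  have := energy_eq hF.differentiable hV.hasDerivAt hV.hasDerivAt_deriv x 0
  nlinarith [hF.nonneg (hV.bound x)]

/-- A profile whose slope is bounded away from zero wherever the profile is nonpositive
cannot decrease at a point where it is nonpositive. -/
theorem deriv_nonneg_of_nonpos {f : ℝ → ℝ} (hW : IsProfile f W W₁) {δ : ℝ} (hδ : 0 < δ)
    (h : ∀ x, W x ≤ 0 → δ ≤ |W₁ x|) {x₀ : ℝ} (hx₀ : W x₀ ≤ 0) : 0 ≤ W₁ x₀ := by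
  by_contra! hneg
  have hanti {b : ℝ} (hb : x₀ ≤ b) (hlt : ∀ x, x₀ ≤ x → x < b → W₁ x < 0) : W b ≤ 0 := by
    have : AntitoneOn W (Set.Icc x₀ b) :=
      antitoneOn_of_deriv_nonpos (convex_Icc _ _) hW.continuous.continuousOn
        (fun x _ => (hW.hasDerivAt x).differentiableAt.differentiableWithinAt) fun x hx => by
          rw [interior_Icc] at hx
          rw [(hW.hasDerivAt x).deriv]
          exact (hlt x hx.1.le hx.2).le
    exact (this ⟨le_rfl, hb⟩ ⟨hb, le_rfl⟩ hb).trans hx₀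
  have hall (x : ℝ) (hx : x₀ ≤ x) : W₁ x < 0 := by
    by_contra! hpos
    set S : Set ℝ := Set.Ici x₀ ∩ W₁ ⁻¹' Set.Ici 0 with hS
    have hSc : IsClosed S := isClosed_Ici.inter (isClosed_Ici.preimage hW.continuous_deriv)
    have hSb : BddBelow S := ⟨x₀, fun y hy => hy.1⟩
    have hmem : sInf S ∈ S := hSc.csInf_mem ⟨x, hx, hpos⟩ hSb
    have hlt (y : ℝ) (hy : x₀ ≤ y) (hy' : y < sInf S) : W₁ y < 0 := by
      by_contra! h'
      exact (notMem_of_lt_csInf hy' hSb) ⟨hy, h'⟩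
    have hne : x₀ < sInf S := by
      refine lt_of_le_of_ne hmem.1 fun h' => ?_
      rw [← h'] at hmem
      exact (not_le.2 hneg) hmem.2
    have hδ' := h _ (hanti hmem.1 hlt)
    have h0 : 0 ≤ W₁ (sInf S) := hmem.2
    rw [abs_of_nonneg h0] at hδ'
    obtain ⟨t, ht, ht'⟩ := intermediate_value_Icc hmem.1 hW.continuous_deriv.continuousOn
      (show δ / 2 ∈ Set.Icc (W₁ x₀) (W₁ (sInf S)) from ⟨by linarith, by linarith⟩)
    rcases ht.2.lt_or_eq with h' | h'
    · linarith [hlt t ht.1 h']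
    · rw [h'] at ht'
      linarith
  exact false_of_le_abs_deriv hW.hasDerivAt hW.continuous_deriv hW.bound hδ
    fun x hx => h x (hanti hx fun y hy _ => hall y hy)

theorem deriv_nonneg_of_antitone {f : ℝ → ℝ} (hW : IsProfile f W W₁) (h : Antitone W₁) (x : ℝ) :
    0 ≤ W₁ x := by
  by_contra! hneg
  refine false_of_le_abs_deriv hW.hasDerivAt hW.continuous_deriv hW.bound (neg_pos.2 hneg)
    fun y (hy : x ≤ y) => ?_
  rw [abs_of_nonpos ((h hy).trans hneg.le)]
  exact neg_le_neg (h hy)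

/-- Two profiles with negative energies `2e` and `e` cannot be ordered. -/
theorem false_of_energy_neg (hF : BalancedDoubleWell F) (hV : IsProfile (deriv F) V V₁)
    (hW : IsProfile (deriv F) W W₁) (hVW : ∀ x, V x ≤ W x) {e : ℝ} (he : e < 0)
    (hEV : V₁ 0 * V₁ 0 / 2 - F (V 0) = 2 * e) (hEW : W₁ 0 * W₁ 0 / 2 - F (W 0) = e) : False := by
  have eV (x : ℝ) : V₁ x * V₁ x / 2 - F (V x) = 2 * e :=
    (energy_eq hF.differentiable hV.hasDerivAt hV.hasDerivAt_deriv x 0).trans hEV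
  have eW (x : ℝ) : W₁ x * W₁ x / 2 - F (W x) = e :=
    (energy_eq hF.differentiable hW.hasDerivAt hW.hasDerivAt_deriv x 0).trans hEW
  by_cases hex : ∃ x₀, W x₀ ≤ 0
  · obtain ⟨x₀, hx₀⟩ := hex
    have hδ : 0 < √(-2 * e) := Real.sqrt_pos.2 (by linarith)
    have hslope (x : ℝ) (hx : W x ≤ 0) : √(-2 * e) ≤ |W₁ x| := by
      refine Real.sqrt_le_iff.2 ⟨abs_nonneg _, ?_⟩
      rw [sq_abs]
      have hm := hF.monotoneOn ⟨(abs_le.1 (hV.bound x)).1, (hVW x).trans hx⟩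
        ⟨(abs_le.1 (hW.bound x)).1, hx⟩ (hVW x)
      nlinarith [eV x, eW x, mul_self_nonneg (V₁ x)]
    have h1 := hW.deriv_nonneg_of_nonpos hδ hslope hx₀
    have h2 := hW.comp_neg.deriv_nonneg_of_nonpos hδ (fun x hx => by
      simpa using hslope (-x) hx) (x₀ := -x₀) (by simpa using hx₀)
    rw [neg_neg] at h2
    have h3 := hslope x₀ hx₀
    rw [show W₁ x₀ = 0 by linarith, abs_zero] at h3
    linarith
  · push Not at hex
    have hsign (x : ℝ) : W x < 1 → deriv F (W x) < 0 := fun h => hF.2.2.2.2.2.2.1 _ ⟨hex x, h⟩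
    have hle (x : ℝ) : W x ≤ 1 := (abs_le.1 (hW.bound x)).2
    have hanti : Antitone W₁ := antitone_of_deriv_nonpos
      (fun x => (hW.hasDerivAt_deriv x).differentiableAt) fun x => by
        rw [(hW.hasDerivAt_deriv x).deriv]
        rcases (hle x).lt_or_eq with h | h
        · exact (hsign x h).le
        · rw [h, hF.2.2.1]
    have h0 (x : ℝ) : W₁ x = 0 := by
      have h1 := hW.deriv_nonneg_of_antitone hanti x
      have h2 := hW.comp_neg.deriv_nonneg_of_antitone
        (fun a b hab => neg_le_neg (hanti (neg_le_neg hab))) (-x)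
      rw [neg_neg] at h2
      linarith
    have h1 : W 0 = 1 := by
      by_contra hne
      have hd := (hW.hasDerivAt_deriv 0).deriv
      rw [show W₁ = fun _ => 0 from funext h0, deriv_const] at hd
      linarith [hsign 0 (lt_of_le_of_ne (hle 0) hne)]
    rw [h0, h1, hF.2.2.2.2.2.2.2.2] at hEW
    linarith

end IsProfile

/-- Uniqueness for the second-order initial value problem `V'' = f(V)`. -/
theorem eq_of_initial_eq {f V V₁ W W₁ : ℝ → ℝ} (hf : ContDiff ℝ 1 f)
    (hV : ∀ x, HasDerivAt V (V₁ x) x) (hV₁ : ∀ x, HasDerivAt V₁ (f (V x)) x)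
    (hW : ∀ x, HasDerivAt W (W₁ x) x) (hW₁ : ∀ x, HasDerivAt W₁ (f (W x)) x)
    (h0 : V 0 = W 0) (h1 : V₁ 0 = W₁ 0) (x : ℝ) : V x = W x := by
  have hfield : ContDiff ℝ 1 fun p : ℝ × ℝ => (p.2, f p.1) :=
    contDiff_snd.prodMk (hf.comp contDiff_fst)
  have hcV (t : ℝ) := (hV t).prodMk (hV₁ t)
  have hcW (t : ℝ) := (hW t).prodMk (hW₁ t)
  set I := Set.Icc (-|x| - 1) (|x| + 1)
  set S : Set (ℝ × ℝ) := (fun t => (V t, V₁ t)) '' I ∪ (fun t => (W t, W₁ t)) '' I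
  have hS : IsCompact S :=
    (isCompact_Icc.image_of_continuousOn (HasDerivAt.continuousOn fun t _ => hcV t)).union
      (isCompact_Icc.image_of_continuousOn (HasDerivAt.continuousOn fun t _ => hcW t))
  obtain ⟨K, hK⟩ := hfield.locallyLipschitz.locallyLipschitzOn.exists_lipschitzOnWith_of_compact hS
  have hx := abs_le.1 (le_refl |x|)
  have := ODE_solution_unique_of_mem_Ioo (v := fun _ p => (p.2, f p.1)) (s := fun _ => S)
    (a := -|x| - 1) (b := |x| + 1) (t₀ := 0) (fun _ _ => hK)
    ⟨by linarith [abs_nonneg x], by linarith [abs_nonneg x]⟩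
    (fun t ht => ⟨hcV t, Or.inl ⟨t, Set.Ioo_subset_Icc_self ht, rfl⟩⟩)
    (fun t ht => ⟨hcW t, Or.inr ⟨t, Set.Ioo_subset_Icc_self ht, rfl⟩⟩)
    (by simp only [h0, h1]) (show x ∈ Set.Ioo (-|x| - 1) (|x| + 1) from
      ⟨by linarith [hx.1], by linarith [hx.2]⟩)
  exact congrArg Prod.fst this

/-- A solution of `g'' = F'(g)` converging to `1` has zero energy. -/
theorem energy_eq_zero_of_tendsto {F g g₁ : ℝ → ℝ} (hF : BalancedDoubleWell F)
    (hg : ∀ x, HasDerivAt g (g₁ x) x) (hg₁ : ∀ x, HasDerivAt g₁ (deriv F (g x)) x)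
    (hlim : Tendsto g atTop (nhds 1)) : g₁ 0 * g₁ 0 / 2 - F (g 0) = 0 := by
  have hmv (n : ℕ) : ∃ ξ : ℝ, (n : ℝ) < ξ ∧ g₁ ξ = g (n + 1) - g n := by
    obtain ⟨ξ, hξ, h⟩ := exists_hasDerivAt_eq_slope g g₁ (lt_add_one (n : ℝ))
      (HasDerivAt.continuousOn fun x _ => hg x) fun x _ => hg x
    exact ⟨ξ, hξ.1, by simpa using h⟩
  choose ξ hξ hslope using hmv
  have hξlim : Tendsto ξ atTop atTop :=
    tendsto_atTop_mono (fun n => (hξ n).le) tendsto_natCast_atTop_atTop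
  have h1 : Tendsto (fun n => g₁ (ξ n)) atTop (nhds 0) := by
    simp only [hslope]
    have := (hlim.comp (tendsto_atTop_add_const_right _ 1 tendsto_natCast_atTop_atTop)).sub
      (hlim.comp (tendsto_natCast_atTop_atTop (R := ℝ)))
    simpa using this
  have h2 : Tendsto (fun n => F (g (ξ n))) atTop (nhds 0) := by
    have := (hF.1.continuous.tendsto 1).comp (hlim.comp hξlim)
    rwa [hF.2.2.2.2.2.2.2.2] at this
  have h3 := ((h1.mul h1).div_const 2).sub h2
  have hconst (n : ℕ) := energy_eq hF.differentiable hg hg₁ (ξ n) 0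
  simp only [hconst] at h3
  simpa using tendsto_nhds_unique tendsto_const_nhds h3

section WaveLimits

variable {F : ℝ → ℝ} {c : ℝ} {w : ℝ × ℝ → ℝ}

theorem IsWave.tendsto_energy_atTop (hw : IsWave (deriv F) c w) (hF : BalancedDoubleWell F)
    (x : ℝ) : Tendsto (fun y => dirDeriv (1, 0) w (x, y) * dirDeriv (1, 0) w (x, y) / 2
      - F (w (x, y))) atTop (nhds 0) := by
  have h1 : Tendsto (fun y => dirDeriv (1, 0) w (x, y)) atTop (nhds 0) := by
    rw [Metric.tendsto_nhds]
    intro ε hε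
    filter_upwards [hw.eventually_dirDeriv_top hF.contDiff_deriv hF.2.2.1 isCoord_fst |x|
      (half_pos hε)] with Y hY
    rw [Real.dist_eq, sub_zero]
    exact (hY x le_rfl).trans_lt (half_lt_self hε)
  have h2 : Tendsto (fun y => F (w (x, y))) atTop (nhds (F 1)) :=
    (hF.differentiable.continuous.tendsto 1).comp (hw.tendsto_atTop x)
  rw [hF.2.2.2.2.2.2.2.2] at h2
  simpa using ((h1.mul h1).div_const 2).sub h2

theorem IsWave.continuous_energy (hw : IsWave (deriv F) c w) (hF : BalancedDoubleWell F) :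
    Continuous fun p => dirDeriv (1, 0) w p * dirDeriv (1, 0) w p / 2 - F (w p) := by
  have h1 := (hw.differentiable_dirDeriv (1, 0)).continuous
  exact ((h1.mul h1).div_const 2).sub (hF.differentiable.continuous.comp hw.differentiable.continuous)

/-- The one-dimensional limits of a wave along vertical directions have zero energy. -/
theorem IsWave.energy_limit_eq_zero (hw : IsWave (deriv F) c w) (hF : BalancedDoubleWell F)
    (hc : 0 < c) {x y : ℕ → ℝ} (hx : Tendsto (fun m => |x m|) atTop atTop) {V V₁ : ℝ → ℝ}
    (hV : IsProfile (deriv F) V V₁)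
    (hlim : TendstoLocallyUniformly (fun m t => w (x m + t, y m)) V atTop)
    (hlim₁ : Tendsto (fun m => dirDeriv (1, 0) w (x m, y m)) atTop (nhds (V₁ 0))) :
    V₁ 0 * V₁ 0 / 2 - F (V 0) = 0 := by
  set E : ℝ × ℝ → ℝ := fun p => dirDeriv (1, 0) w p * dirDeriv (1, 0) w p / 2 - F (w p) with hE
  have henergy {z : ℕ → ℝ} {ψ : ℕ → ℕ} {W W₁ : ℝ → ℝ}
      (h : TendstoLocallyUniformly (fun m t => w (x (ψ m) + t, z m)) W atTop)
      (h₁ : Tendsto (fun m => dirDeriv (1, 0) w (x (ψ m), z m)) atTop (nhds (W₁ 0))) :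
      Tendsto (fun m => E (x (ψ m), z m)) atTop (nhds (W₁ 0 * W₁ 0 / 2 - F (W 0))) := by
    have h0 : Tendsto (fun m => w (x (ψ m), z m)) atTop (nhds (W 0)) := by
      simpa using (tendstoLocallyUniformlyOn_univ.2 h).tendsto_at (Set.mem_univ 0)
    exact ((h₁.mul h₁).div_const 2).sub ((hF.differentiable.continuous.tendsto _).comp h0)
  by_contra hne
  have hneg := lt_of_le_of_ne (hV.energy_nonpos hF) hne
  set e := (V₁ 0 * V₁ 0 / 2 - F (V 0)) / 2 with he
  have hz (m : ℕ) : ∃ z, y m ≤ z ∧ (E (x m, y m) < e → E (x m, z) = e) := by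
    by_cases hm : E (x m, y m) < e
    · obtain ⟨Y, hY, hYy⟩ := (((hw.tendsto_energy_atTop hF (x m)).eventually
        (lt_mem_nhds (show e < 0 by linarith))).and (eventually_ge_atTop (y m))).exists
      have hcont : ContinuousOn (fun t => E (x m, t)) (Set.Icc (y m) Y) :=
        ((hw.continuous_energy hF).comp (by fun_prop)).continuousOn
      obtain ⟨z, hz, hze⟩ := intermediate_value_Icc hYy hcont ⟨hm.le, hY.le⟩
      exact ⟨z, hz.1, fun _ => hze⟩
    · exact ⟨y m, le_rfl, fun h => absurd h hm⟩
  choose z hyz hze using hz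
  obtain ⟨ψ, hψ, W, W₁, hW, hWlim, hWlim₁⟩ := hw.exists_profile hF hc (y := z) hx
  have hEV := henergy (ψ := id) hlim hlim₁
  have hEW := henergy hWlim hWlim₁
  have hEW' : W₁ 0 * W₁ 0 / 2 - F (W 0) = e := by
    refine tendsto_nhds_unique hEW (tendsto_const_nhds.congr' ?_)
    have : ∀ᶠ m in atTop, E (x m, y m) < e := hEV.eventually (gt_mem_nhds (by linarith))
    filter_upwards [hψ.tendsto_atTop.eventually this] with m hm
    exact (hze _ hm).symm
  refine IsProfile.false_of_energy_neg hF hV hW (fun t => ?_) (e := e) (by linarith)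
    (by linarith) hEW'
  have h1 := ((tendstoLocallyUniformlyOn_univ.2 hlim).tendsto_at (Set.mem_univ t)).comp
    hψ.tendsto_atTop
  have h2 := (tendstoLocallyUniformlyOn_univ.2 hWlim).tendsto_at (Set.mem_univ t)
  exact le_of_tendsto_of_tendsto' h1 h2 fun m => (hw.strictMono _).monotone (hyz _)

/-- A locally uniform limit of horizontal slices is the locally uniform limit of the translates,
because the vertical derivative of a wave vanishes as `|x| → ∞`. -/
theorem IsWave.locUnifZero_translate (hw : IsWave (deriv F) c w) (hF : BalancedDoubleWell F)
    (hc : 0 < c) {x y : ℕ → ℝ} (hx : Tendsto (fun m => |x m|) atTop atTop) {V : ℝ → ℝ}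
    (hlim : TendstoLocallyUniformly (fun m t => w (x m + t, y m)) V atTop) :
    LocUnifZero atTop fun m (q : ℝ × ℝ) => w (q + (x m, y m)) - V q.1 := by
  intro R ε hε
  obtain ⟨X, hX⟩ := hw.exists_abs_dirDeriv_snd_le hF hc
    (show 0 < ε / (2 * (|R| + 1)) by positivity)
  have hunif := (tendstoLocallyUniformly_iff_forall_isCompact.1 hlim) (closedBall (0 : ℝ) R)
    (isCompact_closedBall _ _)
  rw [Metric.tendstoUniformlyOn_iff] at hunif
  filter_upwards [hunif (ε / 2) (half_pos hε), hx.eventually_ge_atTop (X + |R|)] with m hm hxm q hq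
  rw [mem_closedBall, dist_zero_right, Prod.norm_def, max_le_iff, Real.norm_eq_abs,
    Real.norm_eq_abs] at hq
  have h1 := hm q.1 (by simpa using hq.1)
  rw [dist_comm, Real.dist_eq] at h1
  have hfar : X ≤ |x m + q.1| := by
    have := abs_sub_abs_le_abs_sub (x m) (-q.1)
    rw [abs_neg, sub_neg_eq_add] at this
    linarith [le_abs_self R]
  have h2 := abs_sub_le_of_hasDerivAt (fun t => hasDerivAt_snd hw.differentiable (x m + q.1) t)
    (fun t => (hX (x m + q.1, t) hfar).1) (y m + q.2) (y m)
  have h3 : ε / (2 * (|R| + 1)) * |y m + q.2 - y m| ≤ ε / 2 := by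
    rw [add_sub_cancel_left]
    calc ε / (2 * (|R| + 1)) * |q.2| ≤ ε / (2 * (|R| + 1)) * (|R| + 1) := by
          gcongr
          linarith [le_abs_self R]
      _ = ε / 2 := by field_simp
  have h4 : q + (x m, y m) = (x m + q.1, y m + q.2) := Prod.ext (add_comm _ _) (add_comm _ _)
  rw [h4]
  have := abs_sub_le (w (x m + q.1, y m + q.2)) (w (x m + q.1, y m)) (V q.1)
  linarith

end WaveLimits

theorem IsProfile.isBddSol {f V V₁ : ℝ → ℝ} {c : ℝ} (hV : IsProfile f V V₁)
    (hC : ContDiff ℝ 3 V) : IsBddSol f c fun q => V q.1 where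
  contDiff := hC.comp contDiff_fst
  eq p := by
    have h {h h' : ℝ → ℝ} (hh : ∀ x, HasDerivAt h (h' x) x) (a : ℝ × ℝ) :
        dirDeriv a (fun q => h q.1) = fun q => h' q.1 * a.1 := by
      funext q
      have := ((hh q.1).hasFDerivAt.comp q (hasFDerivAt_fst (𝕜 := ℝ) (p := q))).fderiv
      simp only [Function.comp_def] at this
      simp [dirDeriv, this, mul_comm]
    have hxx : dirDeriv (1, 0) (fun q : ℝ × ℝ => V₁ q.1) p = f (V p.1) := by
      simp [h hV.hasDerivAt_deriv]
    have h0 : dirDeriv (0, 1) (fun _ : ℝ × ℝ => (0 : ℝ)) p = 0 := by simp [dirDeriv]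
    simp [driftLaplacian, h hV.hasDerivAt, hxx, h0]
  bound p := hV.bound p.1

theorem IsProfile.exists_sign {F V V₁ g : ℝ → ℝ} (hF : BalancedDoubleWell F)
    (hV : IsProfile (deriv F) V V₁) (hV0 : V 0 = 0) (hE : V₁ 0 * V₁ 0 / 2 - F (V 0) = 0)
    (hg : ContDiff ℝ 3 g) (hgeq : ∀ t, deriv (deriv g) t = deriv F (g t))
    (hgtop : Tendsto g atTop (nhds 1)) (hg0 : g 0 = 0) :
    ∃ ε : ℝ, (ε = 1 ∨ ε = -1) ∧ V = fun x => g (ε * x) := by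
  have hd (x : ℝ) : HasDerivAt g (deriv g x) x :=
    (hg.differentiable (by norm_num) x).hasDerivAt
  have hdd (x : ℝ) : HasDerivAt (deriv g) (deriv F (g x)) x := by
    rw [← hgeq]
    have : ContDiff ℝ 2 (deriv g) := ((contDiff_succ_iff_deriv (n := 2)).1 hg).2.2
    exact (this.differentiable (by norm_num) x).hasDerivAt
  have hf : ContDiff ℝ 1 (deriv F) := hF.contDiff_deriv.of_le (by norm_num)
  have hEg := energy_eq_zero_of_tendsto hF hd hdd hgtop
  rw [hg0] at hEg
  rw [hV0] at hE
  rcases mul_self_eq_mul_self_iff.1 (show V₁ 0 * V₁ 0 = deriv g 0 * deriv g 0 by linarith)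
    with h | h
  · refine ⟨1, Or.inl rfl, funext fun x => ?_⟩
    rw [one_mul]
    exact eq_of_initial_eq hf hV.hasDerivAt hV.hasDerivAt_deriv hd hdd (hV0.trans hg0.symm) h x
  · refine ⟨-1, Or.inr rfl, funext fun x => ?_⟩
    have h1 := eq_of_initial_eq hf hV.comp_neg.hasDerivAt hV.comp_neg.hasDerivAt_deriv hd hdd
      (by simpa using hV0.trans hg0.symm) (by simp [h]) (-x)
    simpa using h1

end AllenCahn

/-- Along any sequence going to infinity, translates of `u` along the zero
level curve converge (up to a subsequence), in `C³` on compact sets, to a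
one-dimensional profile `g(±x)` (Lemma 2.3). -/
theorem translates_converge_to_profile
    (F : ℝ → ℝ) (hF : BalancedDoubleWell F) (c : ℝ) (hc : 0 < c)
    (u : ℝ → ℝ → ℝ) (hu : IsTravelingWave F c u)
    (g : ℝ → ℝ) (hg : ContDiff ℝ 3 g)
    (hgeq : ∀ t : ℝ, deriv (deriv g) t = deriv F (g t))
    (hgtop : Tendsto g atTop (nhds 1)) (hgbot : Tendsto g atBot (nhds (-1)))
    (hg0 : g 0 = 0)
    (γ : ℝ → ℝ) (hγ : ContDiff ℝ 3 γ)
    (hγlevel : ∀ x y : ℝ, u x y = 0 ↔ y = γ x)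
    (s : ℕ → ℝ) (hs : Tendsto (fun m => |s m|) atTop atTop) :
    ∃ φ : ℕ → ℕ, StrictMono φ ∧ ∃ ε : ℝ, (ε = 1 ∨ ε = -1) ∧
      ∀ i : ℕ, i ≤ 3 →
        TendstoLocallyUniformly
          (fun k (p : ℝ × ℝ) =>
            iteratedFDeriv ℝ i
              (fun q : ℝ × ℝ => u (s (φ k) + q.1) (γ (s (φ k)) + q.2)) p)
          (iteratedFDeriv ℝ i (fun q : ℝ × ℝ => g (ε * q.1))) atTop := by
  have hw := AllenCahn.isWave_of_isTravelingWave hu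
  obtain ⟨φ, hφ, V, V₁, hV, hlim, hlim₁⟩ := hw.exists_profile hF hc (y := fun m => γ (s m)) hs
  have hsφ : Tendsto (fun m => |s (φ m)|) atTop atTop := hs.comp hφ.tendsto_atTop
  have hE := hw.energy_limit_eq_zero hF hc hsφ hV hlim hlim₁
  have hV0 : V 0 = 0 := by
    have h := (tendstoLocallyUniformlyOn_univ.2 hlim).tendsto_at (Set.mem_univ 0)
    simp only [add_zero, (hγlevel _ _).2 rfl] at h
    exact tendsto_nhds_unique h tendsto_const_nhds
  obtain ⟨ε, hε, rfl⟩ := hV.exists_sign hF hV0 hE hg hgeq hgtop hg0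
  refine ⟨φ, hφ, ε, hε, fun i hi => ?_⟩
  have hC : ContDiff ℝ 3 fun x => g (ε * x) := hg.comp (contDiff_const.mul contDiff_id)
  have htr (m : ℕ) : (fun q : ℝ × ℝ => u (s (φ m) + q.1) (γ (s (φ m)) + q.2))
      = fun q => (fun p : ℝ × ℝ => u p.1 p.2) (q + (s (φ m), γ (s (φ m)))) :=
    funext fun q => congrArg₂ u (add_comm _ _) (add_comm _ _)
  simp only [htr]
  exact AllenCahn.tendstoLocallyUniformly_iteratedFDeriv hF.contDiff_deriv
    (fun m => hw.comp_add_right (s (φ m), γ (s (φ m)))) (hV.isBddSol hC)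
    (hw.locUnifZero_translate hF hc hsφ hlim) hi
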